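/- (Proposition 3.6, vertical tangent at the disc.) There exists a sequence (Ω_n) of nonempty bounded open convex subsets of ℝ² such that, writing x_n := |Ω_n|·λ₁(Ω_n) and y_n := |Ω_n|·μ₁(Ω_n), and A := (π·λ₁(𝔻), π·μ₁(𝔻)) the point corresponding to the unit disc 𝔻, one has: x_n > π·λ₁(𝔻) for all n, (x_n, y_n) → A as n → ∞, and the difference quotient (π·μ₁(𝔻) − y_n)/(x_n − π·λ₁(𝔻)) → +∞. In other words, the diagram 𝓔ᶜ has a vertical tangent at the point A corresponding to discs. -/

import Mathlib

open MeasureTheory Filter Set Real RealInnerProductSpace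

noncomputable section

abbrev E2 : Type := EuclideanSpace ℝ (Fin 2)

/-- First Dirichlet eigenvalue, variational characterization. -/
noncomputable def dEig1 (Ω : Set E2) : ℝ :=
  sInf { R : ℝ | ∃ u : E2 → ℝ, ContDiff ℝ (⊤ : ℕ∞) u ∧ HasCompactSupport u ∧
    tsupport u ⊆ Ω ∧ (∫ x, (u x)^2) ≠ 0 ∧
    R = (∫ x, ‖fderiv ℝ u x‖^2) / (∫ x, (u x)^2) }

/-- First nontrivial Neumann eigenvalue, variational characterization. -/
noncomputable def nEig1 (Ω : Set E2) : ℝ :=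
  sInf { R : ℝ | ∃ u : E2 → ℝ, ContDiff ℝ (⊤ : ℕ∞) u ∧ (∫ x in Ω, u x) = 0 ∧
    (∫ x in Ω, (u x)^2) ≠ 0 ∧
    R = (∫ x in Ω, ‖fderiv ℝ u x‖^2) / (∫ x in Ω, (u x)^2) }

/-- The open unit disc in the plane. -/
def unitDisc : Set E2 := Metric.ball 0 1


/-- coefficients of the Bessel-type series -/
def bc (n k : ℕ) : ℝ := (-1) ^ k / ((k.factorial : ℝ) * ((k + n).factorial : ℝ))

/-- `bf n s = ∑ (-s)^k / (k! (k+n)!)`. -/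
def bf (n : ℕ) (s : ℝ) : ℝ := ∑' k, bc n k * s ^ k

lemma bc_abs_le (n k : ℕ) : |bc n k| ≤ 1 / (k.factorial : ℝ) := by
  unfold bc
  rw [abs_div, abs_pow, abs_neg, abs_one, one_pow, abs_of_pos (by positivity)]
  apply one_div_le_one_div_of_le (by positivity)
  have h1 : (1:ℝ) ≤ ((k + n).factorial : ℝ) := by exact_mod_cast Nat.succ_le_of_lt (Nat.factorial_pos _)
  have h2 : (0:ℝ) < (k.factorial : ℝ) := by positivity
  nlinarith

lemma bf_term_summable (n : ℕ) (s : ℝ) : Summable (fun k => bc n k * s ^ k) := by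
  apply Summable.of_norm_bounded (g := fun k : ℕ => |s| ^ k / (k.factorial : ℝ)) (Real.summable_pow_div_factorial |s|)
  intro k
  rw [Real.norm_eq_abs, abs_mul, abs_pow]
  have := mul_le_mul_of_nonneg_right (bc_abs_le n k) (pow_nonneg (abs_nonneg s) k)
  calc _ ≤ _ := this
    _ = _ := by ring

lemma bc_succ (n k : ℕ) : bc n (k + 1) * ((k : ℝ) + 1) = - bc (n + 1) k := by
  unfold bc
  have e : k + 1 + n = k + (n + 1) := by ring
  rw [e, Nat.factorial_succ k]
  push_cast
  have h1 : ((k.factorial : ℝ)) ≠ 0 := by positivity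
  have h2 : (((k + (n + 1)).factorial : ℝ)) ≠ 0 := by positivity
  have h3 : ((k : ℝ) + 1) ≠ 0 := by positivity
  field_simp
  ring

lemma bf_hasDerivAt (n : ℕ) (s : ℝ) : HasDerivAt (bf n) (- bf (n + 1) s) s := by
  set R := |s| + 1 with hR
  have hRpos : 0 ≤ R := by positivity
  have key := hasDerivAt_tsum_of_isPreconnected (𝕜 := ℝ) (F := ℝ)
    (u := fun k : ℕ => (k : ℝ) * |bc n k| * R ^ (k - 1))
    (g := fun (k : ℕ) (x : ℝ) => bc n k * x ^ k) (g' := fun (k : ℕ) (x : ℝ) => bc n k * ((k : ℝ) * x ^ (k - 1)))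
    (t := Metric.ball (0 : ℝ) R) (y₀ := 0) (y := s) ?_ Metric.isOpen_ball
    (convex_ball (0:ℝ) R).isPreconnected ?_ ?_ ?_ ?_ ?_
  · have e : (∑' k : ℕ, bc n k * ((k : ℝ) * s ^ (k - 1))) = - bf (n + 1) s := by
      have hs : Summable (fun k : ℕ => bc n (k + 1) * (((k + 1 : ℕ) : ℝ) * s ^ (k + 1 - 1))) := by
        refine (bf_term_summable (n + 1) s).neg.congr fun k => ?_
        simp only [Nat.add_sub_cancel]
        rw [← mul_assoc]
        push_cast
        rw [bc_succ]; ring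
      have hs' : Summable (fun k : ℕ => bc n k * ((k : ℝ) * s ^ (k - 1))) :=
        (summable_nat_add_iff (f := fun k : ℕ => bc n k * ((k : ℝ) * s ^ (k - 1))) 1).1 hs
      rw [hs'.tsum_eq_zero_add]
      simp only [Nat.cast_zero, zero_mul, mul_zero, zero_add]
      unfold bf
      rw [← tsum_neg]
      congr 1; ext k
      simp only [Nat.add_sub_cancel]
      rw [← mul_assoc]
      push_cast
      rw [bc_succ]; ring
    rw [e] at key
    exact key
  · rw [← summable_nat_add_iff 1]
    apply Summable.of_norm_bounded (g := fun k : ℕ => R ^ k / (k.factorial : ℝ)) (Real.summable_pow_div_factorial R)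
    intro k
    simp only [Nat.add_sub_cancel]
    rw [Real.norm_eq_abs, abs_of_nonneg (by positivity)]
    have h := bc_abs_le (n+1) k
    rw [← abs_neg, ← bc_succ, abs_mul, abs_of_pos (by positivity : (0:ℝ) < (k:ℝ) + 1)] at h
    have := mul_le_mul_of_nonneg_right h (pow_nonneg hRpos k)
    push_cast
    calc _ = |bc n (k + 1)| * (↑k + 1) * R ^ k := by ring
      _ ≤ _ := this
      _ = _ := by ring
  · intro k y _
    exact (hasDerivAt_pow k y).const_mul _
  · intro k y hy
    rw [Metric.mem_ball, dist_zero_right, Real.norm_eq_abs] at hy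
    rw [Real.norm_eq_abs, abs_mul, abs_mul, abs_pow, Nat.abs_cast]
    have : |y| ^ (k - 1) ≤ R ^ (k - 1) := pow_le_pow_left₀ (abs_nonneg _) hy.le _
    calc _ = (k : ℝ) * |bc n k| * |y| ^ (k - 1) := by ring
      _ ≤ _ := by gcongr
  · simp [hR]; positivity
  · exact bf_term_summable n 0
  · simp [hR]

lemma bf_contDiff_nat (m : ℕ) : ∀ n, ContDiff ℝ m (bf n) := by
  induction m with
  | zero =>
    intro n
    have : Continuous (bf n) := continuous_iff_continuousAt.2 fun s => (bf_hasDerivAt n s).continuousAt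
    exact contDiff_zero.2 this
  | succ m ih =>
    intro n
    have hd : deriv (bf n) = fun s => - bf (n + 1) s := by
      ext s; exact (bf_hasDerivAt n s).deriv
    have : ContDiff ℝ ((m : WithTop ℕ∞) + 1) (bf n) := by
      rw [contDiff_succ_iff_deriv]
      refine ⟨fun s => (bf_hasDerivAt n s).differentiableAt, by simp, ?_⟩
      rw [hd]
      exact (ih (n + 1)).neg
    exact_mod_cast this

lemma bf_contDiff (n : ℕ) : ContDiff ℝ (⊤ : ℕ∞) (bf n) :=
  contDiff_infty.2 fun m => bf_contDiff_nat m n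

lemma bf_continuous (n : ℕ) : Continuous (bf n) := (bf_contDiff n).continuous

lemma bf_zero (n : ℕ) : bf n 0 = 1 / (n.factorial : ℝ) := by
  unfold bf
  rw [tsum_eq_single 0]
  · simp [bc]
  · intro k hk; simp [hk]

/-- recurrence -/
lemma bf_rec (n : ℕ) (s : ℝ) : s * bf (n + 2) s = ((n : ℝ) + 1) * bf (n + 1) s - bf n s := by
  have h1 := bf_term_summable (n + 1) s
  have h0 := bf_term_summable n s
  have h2 := bf_term_summable (n + 2) s
  unfold bf
  rw [← tsum_mul_left, ← tsum_mul_left, ← (h1.mul_left _).tsum_sub h0]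
  rw [((h1.mul_left _).sub h0).tsum_eq_zero_add]
  have z : ((n : ℝ) + 1) * (bc (n + 1) 0 * s ^ 0) - bc n 0 * s ^ 0 = 0 := by
    unfold bc
    simp [Nat.factorial_succ]
    have h1 : ((n.factorial : ℝ)) ≠ 0 := by positivity
    have h3 : ((n : ℝ) + 1) ≠ 0 := by positivity
    field_simp
    ring
  rw [z, zero_add]
  congr 1; ext k
  have e : ((n : ℝ) + 1) * bc (n + 1) (k + 1) - bc n (k + 1) = bc (n + 2) k := by
    unfold bc
    have e1 : k + 1 + (n + 1) = (k + 1 + n) + 1 := by ring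
    have e2 : k + (n + 2) = (k + 1 + n) + 1 := by ring
    rw [e1, e2, Nat.factorial_succ (k + 1 + n), Nat.factorial_succ k]
    push_cast
    have h1 : ((k.factorial : ℝ)) ≠ 0 := by positivity
    have h2 : (((k + 1 + n).factorial : ℝ)) ≠ 0 := by positivity
    have h3 : ((k : ℝ) + 1) ≠ 0 := by positivity
    have h4 : ((k : ℝ) + 1 + n + 1) ≠ 0 := by positivity
    field_simp
    ring
  rw [← e]; ring

lemma fact_ge (k : ℕ) : (2:ℝ) ^ k ≤ 2 * (k.factorial : ℝ) := by
  induction k with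
  | zero => simp
  | succ k ih =>
    rcases Nat.eq_zero_or_pos k with rfl | hk
    · simp
    · rw [Nat.factorial_succ, pow_succ]
      push_cast
      have : (1:ℝ) ≤ k := by exact_mod_cast hk
      have h2 : (0:ℝ) < (k.factorial : ℝ) := by positivity
      nlinarith

lemma bc0_abs_le (k : ℕ) : |bc 0 k| ≤ 4 * (1 / 4) ^ k := by
  unfold bc
  rw [abs_div, abs_pow, abs_neg, abs_one, one_pow, abs_of_pos (by positivity), add_zero]
  have h := fact_ge k
  have hp : (0:ℝ) < 2 ^ k := by positivity
  rw [div_le_iff₀ (by positivity)]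
  have e : (1 / 4 : ℝ) ^ k = 1 / (2 ^ k * 2 ^ k) := by
    rw [← mul_pow, one_div_pow]; norm_num
  rw [e]
  have hp2 : (0:ℝ) < 2 ^ k * 2 ^ k := by positivity
  rw [mul_one_div, div_mul_eq_mul_div, le_div_iff₀ hp2]
  nlinarith

/-- tail estimate -/
lemma bf0_tail (N : ℕ) (s : ℝ) (hs0 : 0 ≤ s) (hs2 : s ≤ 2) :
    |bf 0 s - ∑ k ∈ Finset.range N, bc 0 k * s ^ k| ≤ 8 * (s / 4) ^ N := by
  have hsum := bf_term_summable 0 s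
  have h := hsum.sum_add_tsum_nat_add N
  have e : bf 0 s - ∑ k ∈ Finset.range N, bc 0 k * s ^ k = ∑' k, bc 0 (k + N) * s ^ (k + N) := by
    unfold bf; linarith
  rw [e]
  have hg : Summable (fun k : ℕ => 4 * (s / 4) ^ N * (1 / 2 : ℝ) ^ k) :=
    (summable_geometric_of_lt_one (by norm_num) (by norm_num)).mul_left _
  have hb : ∀ k, ‖bc 0 (k + N) * s ^ (k + N)‖ ≤ 4 * (s / 4) ^ N * (1 / 2 : ℝ) ^ k := by
    intro k
    rw [Real.norm_eq_abs, abs_mul, abs_of_nonneg (pow_nonneg hs0 _)]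
    calc _ ≤ 4 * (1 / 4) ^ (k + N) * s ^ (k + N) := by
            gcongr; exact bc0_abs_le _
      _ = 4 * (s / 4) ^ N * (s / 4) ^ k := by
            rw [div_pow, div_pow, div_pow, one_pow, pow_add, pow_add]; field_simp
      _ ≤ _ := by
            gcongr 4 * (s / 4) ^ N * ?_ ^ k; linarith
  have := tsum_of_norm_bounded hg.hasSum hb
  rw [Real.norm_eq_abs, tsum_mul_left, tsum_geometric_of_lt_one (by norm_num) (by norm_num)] at this
  calc _ ≤ _ := this
    _ = _ := by norm_num; ring

lemma bf0_pos_le_one (s : ℝ) (hs0 : 0 ≤ s) (hs1 : s ≤ 1) : 0 < bf 0 s := by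
  have h := bf0_tail 3 s hs0 (by linarith)
  simp [Finset.sum_range_succ, bc, Nat.factorial] at h
  have h2 := (abs_le.1 h).1
  have h3 : 8 * (s / 4) ^ 3 ≤ 1 / 8 := by
    have : (s/4)^3 ≤ (1/4)^3 := by gcongr
    linarith
  nlinarith [sq_nonneg (s - 2), mul_nonneg hs0 (sub_nonneg.2 hs1)]

lemma bf0_two_neg : bf 0 2 < 0 := by
  have h := bf0_tail 6 2 (by norm_num) le_rfl
  simp [Finset.sum_range_succ, bc, Nat.factorial] at h
  have h2 := (abs_le.1 h).2
  norm_num at h2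
  linarith

/-- First zero of `bf 0`. -/
lemma exists_first_zero : ∃ S : ℝ, 1 < S ∧ bf 0 S = 0 ∧ ∀ s, 0 ≤ s → s < S → 0 < bf 0 s := by
  set Z : Set ℝ := {s | s ∈ Icc (0:ℝ) 2 ∧ bf 0 s = 0} with hZ
  have hZc : IsCompact Z := by
    have : Z = Icc (0:ℝ) 2 ∩ (bf 0) ⁻¹' {0} := by ext; simp [hZ]
    rw [this]
    exact isCompact_Icc.inter_right (isClosed_singleton.preimage (bf_continuous 0))
  have ivt : ∀ t, 0 ≤ t → t ≤ 2 → bf 0 t ≤ 0 → ∃ s ∈ Z, s ≤ t := by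
    intro t ht ht2 hneg
    have := intermediate_value_Icc' ht (bf_continuous 0).continuousOn
    have h0 : (0:ℝ) ∈ Icc (bf 0 t) (bf 0 0) := ⟨hneg, by rw [bf_zero]; simp⟩
    obtain ⟨s, hs, hs'⟩ := this h0
    exact ⟨s, ⟨⟨hs.1, hs.2.trans ht2⟩, hs'⟩, hs.2⟩
  have hne : Z.Nonempty := by
    obtain ⟨s, hs, _⟩ := ivt 2 (by norm_num) le_rfl bf0_two_neg.le
    exact ⟨s, hs⟩
  obtain ⟨S, hS, hmin⟩ := hZc.exists_isLeast hne
  refine ⟨S, ?_, hS.2, ?_⟩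
  · by_contra hcon
    push Not at hcon
    have := bf0_pos_le_one S hS.1.1 hcon
    linarith [hS.2]
  · intro s hs hsS
    by_contra hcon
    push Not at hcon
    obtain ⟨z, hz, hzs⟩ := ivt s hs (hsS.le.trans hS.1.2) hcon
    have := hmin hz
    linarith

lemma bf1_pos {S : ℝ} (hpos : ∀ s, 0 ≤ s → s < S → 0 < bf 0 s) (s : ℝ) (hs : 0 ≤ s) (hsS : s ≤ S) :
    0 < bf 1 s := by
  rcases hs.eq_or_lt with rfl | hs'
  · rw [bf_zero]; simp
  have hd : ∀ x, HasDerivAt (fun x => x * bf 1 x) (bf 0 x) x := by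
    intro x
    refine ((hasDerivAt_id x).mul (bf_hasDerivAt 1 x)).congr_deriv ?_
    have := bf_rec 0 x
    simp at this
    have e : bf (1 + 1) x = bf 2 x := rfl
    rw [e, id]
    linarith
  have hm : StrictMonoOn (fun x => x * bf 1 x) (Icc 0 s) := by
    apply strictMonoOn_of_deriv_pos (convex_Icc 0 s)
    · exact (continuous_id.mul (bf_continuous 1)).continuousOn
    · intro x hx
      rw [interior_Icc] at hx
      rw [(hd x).deriv]
      exact hpos x hx.1.le (hx.2.trans_le hsS)
  have := hm ⟨le_rfl, hs⟩ ⟨hs, le_rfl⟩ hs'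
  simp at this
  exact (pos_iff_pos_of_mul_pos this).1 hs'


lemma abs_le_pow_of_deriv {h h' : ℝ → ℝ} {K : ℝ} (n : ℕ) (hK : 0 ≤ K)
    (hd : ∀ x, HasDerivAt h (h' x) x) (h0 : h 0 = 0)
    (hb : ∀ x, |x| ≤ 1 → |h' x| ≤ K * |x| ^ n) :
    ∀ x, |x| ≤ 1 → |h x| ≤ K * |x| ^ (n + 1) := by
  intro x hx
  have hconv : Convex ℝ (Metric.closedBall (0:ℝ) |x|) := convex_closedBall _ _
  have := hconv.norm_image_sub_le_of_norm_hasDerivWithin_le (f := h) (f' := h') (C := K * |x| ^ n)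
    (x := 0) (y := x) (fun y _ => (hd y).hasDerivWithinAt) ?_ ?_ ?_
  · rw [h0] at this
    simp only [sub_zero, Real.norm_eq_abs] at this
    rw [pow_succ, ← mul_assoc]; exact this
  · intro y hy
    rw [Metric.mem_closedBall, dist_zero_right, Real.norm_eq_abs] at hy
    rw [Real.norm_eq_abs]
    refine (hb y (hy.trans hx)).trans ?_
    gcongr
  · simp
  · simp

/-- Taylor estimates at the first zero. -/
lemma bf_taylor (S : ℝ) : ∃ K : ℝ, 0 ≤ K ∧ ∀ x, |x| ≤ 1 →
    |bf 1 (S + x) - bf 1 S + bf 2 S * x| ≤ K * |x| ^ 2 ∧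
    |bf 0 (S + x) - bf 0 S + bf 1 S * x - bf 2 S * x ^ 2 / 2| ≤ K * |x| ^ 3 := by
  have hc : Continuous (fun x => bf 3 (S + x)) := (bf_continuous 3).comp (by fun_prop)
  obtain ⟨K, hK⟩ := (isCompact_closedBall (0:ℝ) 1).exists_bound_of_continuousOn hc.continuousOn
  have hK' : ∀ x : ℝ, |x| ≤ 1 → |bf 3 (S + x)| ≤ K := by
    intro x hx
    exact hK x (by simpa using hx)
  have hK0 : 0 ≤ K := (abs_nonneg _).trans (hK' 0 (by simp))
  have hd : ∀ n x, HasDerivAt (fun x => bf n (S + x)) (- bf (n+1) (S + x)) x := fun n x =>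
    (bf_hasDerivAt n (S + x)).comp_const_add S x
  have h2 := abs_le_pow_of_deriv (h := fun x => bf 2 (S + x) - bf 2 S)
    (h' := fun x => - bf 3 (S + x)) (K := K) 0 hK0
    (fun x => (hd 2 x).sub_const _) (by simp) (by intro x hx; simpa using hK' x hx)
  have h1 := abs_le_pow_of_deriv (h := fun x => bf 1 (S + x) - bf 1 S + bf 2 S * x)
    (h' := fun x => - bf 2 (S + x) + bf 2 S * 1) (K := K) 1 hK0
    (fun x => ((hd 1 x).sub_const _).add ((hasDerivAt_id x).const_mul _)) (by simp) (by
      intro x hx; have := h2 x hx; rw [← abs_neg]; convert this using 2; ring)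
  have h0 := abs_le_pow_of_deriv
    (h := fun x => bf 0 (S + x) - bf 0 S + bf 1 S * x - bf 2 S * x ^ 2 / 2)
    (h' := fun x => - bf 1 (S + x) + bf 1 S * 1 - bf 2 S * ((2:ℕ) * x ^ 1) / 2) (K := K) 2 hK0
    (fun x => (((hd 0 x).sub_const _).add ((hasDerivAt_id x).const_mul _)).sub
      (((hasDerivAt_pow 2 x).const_mul _).div_const 2)) (by simp) (by
      intro x hx; have := h1 x hx; rw [← abs_neg]; convert this using 2; push_cast; ring)
  exact ⟨K, hK0, fun x hx => ⟨h1 x hx, h0 x hx⟩⟩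

set_option maxHeartbeats 800000 in
lemma poly_lower {S b c α y : ℝ} (hS : 1 < S) (hb : 0 < b) (hb1 : b ≤ 1 / 4) (hc : |c| ≤ 1)
    (hα1 : 1 ≤ α) (hα : α ^ 2 = 1 + b ^ 2) (hy : (1 + y) * (α - b * c) = 1) :
    |y| ≤ 2 * b ∧ b ^ 2 * (1 / 2 + (S - 3 / 2) * c ^ 2) - (5 * S + 20) * b ^ 3 ≤
      (1 - S * b * c) * (-y + y ^ 2 / 2) + b * c * (1 - y) := by
  obtain ⟨hc1, hc2⟩ := abs_le.1 hc
  set A := α - 1 with hA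
  have hA0 : 0 ≤ A := by linarith
  have hAeq : A * (A + 2) = b ^ 2 := by rw [hA]; nlinarith
  have hAup : A ≤ b ^ 2 / 2 := by nlinarith
  have hAb : A ≤ b / 8 := by nlinarith
  have hAlow : b ^ 2 / 2 - b ^ 3 ≤ A := by
    have : A ^ 2 ≤ (b/8) * (b^2/2) := by nlinarith
    nlinarith
  have hbc1 : b * c ≤ b := by nlinarith
  have hbc2 : -b ≤ b * c := by nlinarith
  have hye : y = (b * c - A) * (1 + y) := by
    have : α = 1 + A := by rw [hA]; ring
    rw [this] at hy; nlinarith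
  have hD : 0 < α - b * c := by nlinarith
  have hy1 : 0 < 1 + y := by
    by_contra h; push Not at h; nlinarith
  have hyab : |y| ≤ 2 * b := by
    have hq : |b * c - A| ≤ b + b / 8 := by rw [abs_le]; constructor <;> nlinarith
    have h2 : |y| ≤ (b + b / 8) * (1 + |y|) := by
      calc |y| = |b * c - A| * |1 + y| := by rw [← abs_mul, ← hye]
        _ ≤ (b + b / 8) * (1 + |y|) := by
            gcongr
            calc |1 + y| ≤ |(1:ℝ)| + |y| := abs_add_le _ _
              _ = _ := by simp
    have h3 := abs_nonneg y
    nlinarith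
  refine ⟨hyab, ?_⟩
  obtain ⟨hy2, hy3⟩ := abs_le.1 hyab
  obtain ⟨z, hz⟩ : ∃ z, y = b * c + z := ⟨y - b * c, by ring⟩
  have hzy : z = b * c * y - A * (1 + y) := by linarith
  have hbcy : |b * c * y| ≤ 2 * b ^ 2 := by
    rw [abs_mul]
    have : |b * c| ≤ b := abs_le.2 ⟨hbc2, hbc1⟩
    calc |b * c| * |y| ≤ b * (2 * b) := by gcongr
      _ = _ := by ring
  obtain ⟨g1, g2⟩ := abs_le.1 hbcy
  have hA1 : A * (1 + y) ≤ b ^ 2 := by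
    have : 1 + y ≤ 2 := by linarith
    nlinarith
  have hA1' : 0 ≤ A * (1 + y) := by positivity
  have hzab : |z| ≤ 3 * b ^ 2 := by rw [abs_le]; constructor <;> linarith
  have hbcz : |b * c * z| ≤ 3 * b ^ 3 := by
    rw [abs_mul]
    have : |b * c| ≤ b := abs_le.2 ⟨hbc2, hbc1⟩
    calc |b * c| * |z| ≤ b * (3 * b ^ 2) := by gcongr
      _ = _ := by ring
  obtain ⟨k1, k2⟩ := abs_le.1 hbcz
  have hbyy : |b * c * y ^ 2| ≤ 4 * b ^ 3 := by
    rw [abs_mul, abs_pow]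
    have : |b * c| ≤ b := abs_le.2 ⟨hbc2, hbc1⟩
    calc |b * c| * |y| ^ 2 ≤ b * (2 * b) ^ 2 := by gcongr
      _ = _ := by ring
  obtain ⟨l1, l2⟩ := abs_le.1 hbyy
  have hAy : A * y ≥ - b ^ 3 := by nlinarith
  have e : (1 - S * b * c) * (-y + y ^ 2 / 2) + b * c * (1 - y)
      = A * (1 + y) + (S - 2) * (b * c * y) + y ^ 2 / 2 - S / 2 * (b * c * y ^ 2) := by
    linear_combination (-1 : ℝ) * hye
  rw [e]
  have t1 : (S - 2) * (b * c * y) ≥ (S - 2) * (b^2 * c ^ 2) - (S + 2) * (3 * b ^ 3) := by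
    have : b * c * y = b ^ 2 * c ^ 2 + b * c * z := by rw [hz]; ring
    rw [this]
    have h1 := mul_le_mul_of_nonneg_left k1 (by linarith : (0:ℝ) ≤ S)
    linarith
  have t2 : y ^ 2 / 2 ≥ b ^ 2 * c ^ 2 / 2 - 3 * b ^ 3 := by
    have : y ^ 2 = b ^ 2 * c ^ 2 + 2 * (b * c * z) + z ^ 2 := by rw [hz]; ring
    have := sq_nonneg z
    linarith
  have t3 : S / 2 * (b * c * y ^ 2) ≤ S / 2 * (4 * b ^ 3) := by gcongr
  have hb3 := pow_pos hb 3
  have t4 : 0 ≤ S * b ^ 3 := by positivity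
  linarith

set_option maxHeartbeats 800000 in
lemma ell_pos {S : ℝ} (hS : 1 < S) (hz : bf 0 S = 0)
    (hpos : ∀ s, 0 ≤ s → s < S → 0 < bf 0 s) :
    ∃ b₀ : ℝ, 0 < b₀ ∧ ∀ b, 0 < b → b < b₀ → ∀ α, 1 ≤ α → α ^ 2 = 1 + b ^ 2 →
      ∀ c, |c| ≤ 1 → ∀ s, 0 ≤ s → s * (α - b * c) ≤ S →
        0 < bf 0 s + S * b * c * (s * bf 2 s) := by
  obtain ⟨K, hK0, hK⟩ := bf_taylor S
  set a := bf 1 S with ha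
  have ha0 : 0 < a := bf1_pos hpos S (by linarith) le_rfl
  have hf2 : S * bf 2 S = a := by have := bf_rec 0 S; simp at this; rw [hz] at this; linarith
  -- lower bound for bf 1 on a neighbourhood of [0,S]
  have hopen : IsOpen {s : ℝ | 0 < bf 1 s} := isOpen_lt continuous_const (bf_continuous 1)
  have hsub : Icc 0 S ⊆ {s : ℝ | 0 < bf 1 s} := fun s hs => bf1_pos hpos s hs.1 hs.2
  obtain ⟨η, hη0, hη⟩ : ∃ η > 0, ∀ s ∈ Icc 0 (S + η), 0 < bf 1 s := by
    have h1 := hopen.mem_nhds (show S ∈ _ from ha0)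
    obtain ⟨η, hη, hb⟩ := Metric.mem_nhds_iff.1 h1
    refine ⟨η / 2, by positivity, fun s hs => ?_⟩
    rcases le_or_gt s S with h | h
    · exact hsub ⟨hs.1, h⟩
    · apply hb
      rw [Metric.mem_ball, Real.dist_eq, abs_of_pos (by linarith)]
      linarith [hs.2]
  obtain ⟨s₁, hs₁, hmin⟩ := (isCompact_Icc (a := (0:ℝ)) (b := S + η)).exists_isMinOn
    ⟨0, by constructor <;> linarith⟩ (bf_continuous 1).continuousOn
  set m := bf 1 s₁ with hm
  have hm0 : 0 < m := hη s₁ hs₁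
  have hmle : ∀ s ∈ Icc 0 (S + η), m ≤ bf 1 s := fun s hs => hmin hs
  obtain ⟨L, hL⟩ := (isCompact_Icc (a := (0:ℝ)) (b := S + η)).exists_bound_of_continuousOn
    ((bf_continuous 1).sub (bf_continuous 2)).continuousOn
  have hL0 : 0 ≤ L := (norm_nonneg _).trans (hL 0 (by constructor <;> linarith))
  set d := min (1/2) (S - 1) with hd
  have hd0 : 0 < d := by rw [hd]; apply lt_min; norm_num; linarith
  set Q := a * S * (5 * S + 20) + 16 * K * S ^ 3 + 4 * K * S ^ 3 with hQ
  have hQ0 : 0 < Q := by positivity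
  refine ⟨min (min (1/4) (1 / (2 * S))) (min (η / (2 * S)) (min (m / (2 * S * (L + 1))) (a * S * d / Q))), by positivity, ?_⟩
  intro b hb hbb α hα1 hα c hc s hs hsS
  simp only [lt_min_iff] at hbb
  obtain ⟨⟨hb1, hb2⟩, hb3, hb4, hb5⟩ := hbb
  have hS0 : 0 < S := by linarith
  rw [lt_div_iff₀ (by positivity)] at hb2 hb3 hb4 hb5
  obtain ⟨hc1, hc2⟩ := abs_le.1 hc
  have hbc1 : b * c ≤ b := by nlinarith
  have hbc2 : -b ≤ b * c := by nlinarith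
  have hD : 0 < α - b * c := by nlinarith
  obtain ⟨y, hy⟩ : ∃ y, (1 + y) * (α - b * c) = 1 := ⟨1 / (α - b * c) - 1, by field_simp; ring⟩
  obtain ⟨hyab, hpoly⟩ := poly_lower hS hb hb1.le hc hα1 hα hy
  obtain ⟨hy2, hy3⟩ := abs_le.1 hyab
  have hsmax : s ≤ S * (1 + y) := by
    have : s * (α - b * c) ≤ S * (1 + y) * (α - b * c) := by
      rw [mul_assoc, hy]; linarith
    exact le_of_mul_le_mul_right this hD
  have hSy : S * (1 + y) ≤ S + η := by nlinarith
  have hSbc : |S * b * c| ≤ S * b := by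
    rw [abs_mul, abs_of_pos (by positivity : 0 < S * b)]
    exact mul_le_of_le_one_right (by positivity) hc
  -- rewrite
  have erw : ∀ s, bf 0 s + S * b * c * (s * bf 2 s) = (1 - S * b * c) * bf 0 s + S * b * c * bf 1 s := by
    intro s
    have := bf_rec 0 s; simp at this; rw [this]; ring
  rw [erw]
  set w : ℝ → ℝ := fun s => (1 - S * b * c) * bf 0 s + S * b * c * bf 1 s with hw
  have hwd : ∀ s, HasDerivAt w ((1 - S * b * c) * (- bf 1 s) + S * b * c * (- bf 2 s)) s := fun s =>
    ((bf_hasDerivAt 0 s).const_mul _).add ((bf_hasDerivAt 1 s).const_mul _)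
  have hanti : AntitoneOn w (Icc 0 (S + η)) := by
    apply antitoneOn_of_deriv_nonpos (convex_Icc _ _)
    · exact fun s _ => (hwd s).continuousAt.continuousWithinAt
    · exact fun s _ => (hwd s).differentiableAt.differentiableWithinAt
    · intro s hs
      rw [interior_Icc] at hs
      have hs' : s ∈ Icc 0 (S + η) := ⟨hs.1.le, hs.2.le⟩
      rw [(hwd s).deriv]
      have h1 := hmle s hs'
      have h2 := hL s hs'
      rw [Real.norm_eq_abs] at h2
      have h3 : S * b * c * (bf 1 s - bf 2 s) ≤ S * b * L := by
        calc _ ≤ |S * b * c * (bf 1 s - bf 2 s)| := le_abs_self _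
          _ = |S * b * c| * |bf 1 s - bf 2 s| := abs_mul _ _
          _ ≤ S * b * L := mul_le_mul hSbc h2 (abs_nonneg _) (by positivity)
      have h4 : S * b * L ≤ m := by
        have : 0 ≤ S * b := by positivity
        have h5 : b * (2 * S * (L + 1)) = 2 * (S * b * L) + 2 * (S * b) := by ring
        have h6 : 0 ≤ S * b * L := by positivity
        linarith
      have h5 : (1 - S * b * c) * (- bf 1 s) + S * b * c * (- bf 2 s) = S * b * c * (bf 1 s - bf 2 s) - bf 1 s := by ring
      linarith
  have hy1 : 0 ≤ 1 + y := by nlinarith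
  have hle : w (S * (1 + y)) ≤ w s := hanti ⟨hs, hsmax.trans hSy⟩ ⟨by positivity, hSy⟩ hsmax
  refine lt_of_lt_of_le ?_ hle
  -- Taylor
  have hx : |S * y| ≤ 1 := by
    rw [abs_mul, abs_of_pos hS0]; nlinarith
  obtain ⟨T1, T0⟩ := hK (S * y) hx
  rw [hz] at T0
  have exy : S * (1 + y) = S + S * y := by ring
  have hxb : |S * y| ≤ 2 * S * b := by
    rw [abs_mul, abs_of_pos hS0]; nlinarith
  have T1' : |bf 1 (S + S * y) - a + bf 2 S * (S * y)| ≤ K * (4 * S ^ 2 * b ^ 2) := by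
    refine T1.trans ?_
    calc K * |S * y| ^ 2 ≤ K * (2 * S * b) ^ 2 := by gcongr
      _ = _ := by ring
  have T0' : |bf 0 (S + S * y) - 0 + a * (S * y) - bf 2 S * (S * y) ^ 2 / 2| ≤ K * (8 * S ^ 3 * b ^ 3) := by
    refine T0.trans ?_
    calc K * |S * y| ^ 3 ≤ K * (2 * S * b) ^ 3 := by gcongr
      _ = _ := by ring
  set r0 := bf 0 (S + S * y) - 0 + a * (S * y) - bf 2 S * (S * y) ^ 2 / 2 with hr0
  set r1 := bf 1 (S + S * y) - a + bf 2 S * (S * y) with hr1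
  have hwe : w (S * (1 + y)) = a * S * ((1 - S * b * c) * (-y + y ^ 2 / 2) + b * c * (1 - y))
      + (1 - S * b * c) * r0 + S * b * c * r1 := by
    rw [hw, hr0, hr1, exy]
    simp only
    linear_combination ((1 - S * b * c) * S * y ^ 2 / 2 - S * b * c * y) * (hf2 : S * bf 2 S = a)
  rw [hwe]
  have hSb : S * b ≤ 1 := by nlinarith
  have u0 : |(1 - S * b * c) * r0| ≤ 2 * (K * (8 * S ^ 3 * b ^ 3)) := by
    rw [abs_mul]
    have : |1 - S * b * c| ≤ 2 := by
      obtain ⟨p1, p2⟩ := abs_le.1 hSbc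
      rw [abs_le]; constructor <;> linarith
    gcongr
  have u1 : |S * b * c * r1| ≤ S * b * (K * (4 * S ^ 2 * b ^ 2)) := by
    rw [abs_mul]
    gcongr
  have u0' := (abs_le.1 u0).1
  have u1' := (abs_le.1 u1).1
  have hdle : d ≤ 1 / 2 + (S - 3 / 2) * c ^ 2 := by
    have hcc : c ^ 2 ≤ 1 := (sq_le_one_iff_abs_le_one c).2 hc
    have h1 : d ≤ 1/2 := min_le_left _ _
    have h2 : d ≤ S - 1 := min_le_right _ _
    have g1 := mul_le_mul_of_nonneg_right h1 (by linarith : 0 ≤ 1 - c ^ 2)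
    have g2 := mul_le_mul_of_nonneg_right h2 (sq_nonneg c)
    linarith
  have hfin : 0 < a * S * (b ^ 2 * d) - Q * b ^ 3 := by
    have : 0 < b ^ 2 * (a * S * d - b * Q) := by
      apply mul_pos (by positivity); linarith
    linarith
  have haS : 0 < a * S := by positivity
  have hp2 := mul_le_mul_of_nonneg_left hpoly haS.le
  have hp3 : a * S * (b ^ 2 * d) ≤ a * S * (b ^ 2 * (1 / 2 + (S - 3 / 2) * c ^ 2)) := by gcongr
  have hQe : Q * b ^ 3 = a * S * ((5 * S + 20) * b ^ 3) + 2 * (K * (8 * S ^ 3 * b ^ 3)) + S * b * (K * (4 * S ^ 2 * b ^ 2)) := by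
    rw [hQ]; ring
  linarith


/-- standard basis vectors -/
def ee (i : Fin 2) : E2 := EuclideanSpace.single i 1

/-- partial derivatives -/
def pd (i : Fin 2) (u : E2 → ℝ) (x : E2) : ℝ := fderiv ℝ u x (ee i)

lemma norm_clm_sq (L : E2 →L[ℝ] ℝ) : ‖L‖ ^ 2 = (L (ee 0)) ^ 2 + (L (ee 1)) ^ 2 := by
  set v := (InnerProductSpace.toDual ℝ E2).symm L with hv
  have h1 : ‖L‖ = ‖v‖ := by rw [hv, LinearIsometryEquiv.norm_map]
  have h2 : ∀ i, L (ee i) = v i := by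
    intro i
    have : inner ℝ v (ee i) = L (ee i) := by rw [hv, InnerProductSpace.toDual_symm_apply]
    rw [← this, ee, EuclideanSpace.inner_single_right]; simp
  rw [h1, EuclideanSpace.norm_sq_eq, Fin.sum_univ_two, h2, h2]
  simp

lemma norm_fderiv_sq (u : E2 → ℝ) (x : E2) : ‖fderiv ℝ u x‖ ^ 2 = (pd 0 u x) ^ 2 + (pd 1 u x) ^ 2 :=
  norm_clm_sq _

lemma norm_sq_E2 (x : E2) : ‖x‖ ^ 2 = (x 0) ^ 2 + (x 1) ^ 2 := by
  rw [EuclideanSpace.norm_sq_eq, Fin.sum_univ_two]; simp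

lemma pd_eq {i : Fin 2} {u : E2 → ℝ} {x : E2} {d : ℝ} (hu : DifferentiableAt ℝ u x)
    (h : HasDerivAt (fun t : ℝ => u (x + t • ee i)) d 0) : pd i u x = d := by
  have h1 : HasDerivAt (fun t : ℝ => u (x + t • ee i)) (fderiv ℝ u x (ee i)) 0 :=
    hu.hasFDerivAt.hasLineDerivAt (ee i)
  exact h1.unique h

lemma pd_contDiff {i : Fin 2} {u : E2 → ℝ} (hu : ContDiff ℝ (⊤ : ℕ∞) u) :
    ContDiff ℝ (⊤ : ℕ∞) (pd i u) := by
  have : ContDiff ℝ (⊤ : ℕ∞) (fderiv ℝ u) := hu.fderiv_right (by simp)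
  exact this.clm_apply contDiff_const

lemma pd_tsupport {i : Fin 2} {u : E2 → ℝ} {x : E2} (hx : x ∉ tsupport u) : pd i u x = 0 := by
  have h : u =ᶠ[nhds x] (fun _ => (0:ℝ)) := notMem_tsupport_iff_eventuallyEq.1 hx
  rw [pd, h.fderiv_eq]; simp

lemma pd_hasCompactSupport {i : Fin 2} {u : E2 → ℝ} (hc : HasCompactSupport u) :
    HasCompactSupport (pd i u) := by
  apply hc.mono'
  intro x hx
  by_contra h
  exact hx (pd_tsupport h)

lemma integral_pd_zero {i : Fin 2} {f : E2 → ℝ} (hf : ContDiff ℝ 1 f) (hc : HasCompactSupport f) :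
    ∫ x, pd i f x = 0 := by
  have hcont : Continuous (pd i f) := by
    have : Continuous (fderiv ℝ f) := hf.continuous_fderiv (by simp)
    exact this.clm_apply continuous_const
  have h := integral_mul_fderiv_eq_neg_fderiv_mul_of_integrable (𝕜 := ℝ) (μ := (volume : Measure E2))
    (f := f) (g := fun _ => (1:ℝ)) (v := ee i) ?_ ?_ ?_ ?_ ?_
  · simp at h
    exact h
  · simp only [mul_one]
    exact hcont.integrable_of_hasCompactSupport (pd_hasCompactSupport hc)
  · simp
  · simp only [mul_one]
    exact hf.continuous.integrable_of_hasCompactSupport hc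
  · exact fun x _ => (hf.differentiable (by simp)) x
  · exact fun x _ => differentiableAt_const _

lemma dirichlet_set_nonempty {Ω : Set E2} (hΩ : IsOpen Ω) (hne : Ω.Nonempty) :
    { R : ℝ | ∃ u : E2 → ℝ, ContDiff ℝ (⊤ : ℕ∞) u ∧ HasCompactSupport u ∧
    tsupport u ⊆ Ω ∧ (∫ x, (u x)^2) ≠ 0 ∧
    R = (∫ x, ‖fderiv ℝ u x‖^2) / (∫ x, (u x)^2) }.Nonempty := by
  obtain ⟨x, hx⟩ := hne
  obtain ⟨u, hu1, hu2, hu3, hu4, hu5⟩ := exists_contDiff_tsupport_subset (n := (⊤ : ℕ∞)) (hΩ.mem_nhds hx)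
  refine ⟨_, u, hu3, hu2, hu1, ?_, rfl⟩
  have hcont : Continuous (fun x => u x ^ 2) := hu3.continuous.pow 2
  have : 0 < ∫ x, u x ^ 2 := by
    apply hcont.integral_pos_of_hasCompactSupport_nonneg_nonzero (x := x)
    · exact hu2.comp_left (g := fun y => y ^ 2) (by simp)
    · intro y; positivity
    · simp [hu5]
  exact this.ne'

lemma dEig1_bddBelow (Ω : Set E2) : BddBelow { R : ℝ | ∃ u : E2 → ℝ, ContDiff ℝ (⊤ : ℕ∞) u ∧ HasCompactSupport u ∧
    tsupport u ⊆ Ω ∧ (∫ x, (u x)^2) ≠ 0 ∧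
    R = (∫ x, ‖fderiv ℝ u x‖^2) / (∫ x, (u x)^2) } := by
  refine ⟨0, ?_⟩
  rintro R ⟨u, -, -, -, -, rfl⟩
  apply div_nonneg <;> exact integral_nonneg fun x => by positivity

lemma nEig1_bddBelow (Ω : Set E2) : BddBelow { R : ℝ | ∃ u : E2 → ℝ, ContDiff ℝ (⊤ : ℕ∞) u ∧ (∫ x in Ω, u x) = 0 ∧
    (∫ x in Ω, (u x)^2) ≠ 0 ∧
    R = (∫ x in Ω, ‖fderiv ℝ u x‖^2) / (∫ x in Ω, (u x)^2) } := by
  refine ⟨0, ?_⟩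
  rintro R ⟨u, -, -, -, rfl⟩
  apply div_nonneg <;> exact integral_nonneg fun x => by positivity

lemma sq_int_integrable {u : E2 → ℝ} (hu : Continuous u) (hc : HasCompactSupport u) :
    Integrable (fun x => u x ^ 2) := by
  have h1 : Continuous (fun x => u x ^ 2) := hu.pow 2
  have h2 : HasCompactSupport (fun x => u x ^ 2) := by
    apply hc.mono
    intro x hx
    simp only [Function.mem_support] at hx ⊢
    intro h
    simp [h] at hx
  exact h1.integrable_of_hasCompactSupport h2

/-- Barta / Picone lower bound. -/
lemma barta {Ω : Set E2} (hΩ : IsOpen Ω) (hne : Ω.Nonempty) {w : E2 → ℝ}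
    (hw : ContDiff ℝ (⊤ : ℕ∞) w) (hpos : ∀ x ∈ Ω, 0 < w x) {Λ : ℝ}
    (hΛ : ∀ x ∈ Ω, Λ * w x ≤ - (pd 0 (pd 0 w) x + pd 1 (pd 1 w) x)) : Λ ≤ dEig1 Ω := by
  apply le_csInf (dirichlet_set_nonempty hΩ hne)
  rintro R ⟨u, hu, hc, hsupp, hne0, rfl⟩
  have hnn : 0 ≤ ∫ x, u x ^ 2 := integral_nonneg fun x => by positivity
  have hpos0 : 0 < ∫ x, u x ^ 2 := lt_of_le_of_ne hnn (Ne.symm hne0)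
  rw [le_div_iff₀ hpos0]
  set f : Fin 2 → E2 → ℝ := fun i x => u x ^ 2 * pd i w x * (w x)⁻¹ with hf
  have hfs : ∀ i, ∀ x, x ∉ tsupport u → f i =ᶠ[nhds x] (fun _ => (0:ℝ)) := by
    intro i x hx
    have h : u =ᶠ[nhds x] (fun _ => (0:ℝ)) := notMem_tsupport_iff_eventuallyEq.1 hx
    filter_upwards [h] with y hy
    simp [hf, hy]
  have hfc : ∀ i, ContDiff ℝ (⊤ : ℕ∞) (f i) := by
    intro i
    rw [contDiff_iff_contDiffAt]
    intro x
    by_cases hx : x ∈ tsupport u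
    · have hwx : w x ≠ 0 := (hpos x (hsupp hx)).ne'
      exact ((hu.contDiffAt.pow 2).mul (pd_contDiff hw).contDiffAt).mul (hw.contDiffAt.inv hwx)
    · exact contDiffAt_const.congr_of_eventuallyEq (hfs i x hx)
  have hfcs : ∀ i, HasCompactSupport (f i) := by
    intro i
    apply hc.mono'
    intro x hx
    by_contra h
    exact hx (hfs i x h).eq_of_nhds
  have hInt0 : ∀ i, ∫ x, pd i (f i) x = 0 := fun i =>
    integral_pd_zero ((hfc i).of_le (by exact_mod_cast le_top)) (hfcs i)
  have hi : ∀ i, Integrable (pd i (f i)) := fun i =>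
    (pd_contDiff (hfc i)).continuous.integrable_of_hasCompactSupport (pd_hasCompactSupport (hfcs i))
  have hg : ∀ i, Integrable (fun x => pd i u x ^ 2) := fun i =>
    sq_int_integrable (pd_contDiff hu).continuous (pd_hasCompactSupport hc)
  have hpt : ∀ x, Λ * u x ^ 2 ≤ ‖fderiv ℝ u x‖ ^ 2 - (pd 0 (f 0) x + pd 1 (f 1) x) := by
    intro x
    by_cases hx : x ∈ tsupport u
    · have hxΩ := hsupp hx
      have hwx : 0 < w x := hpos x hxΩ
      have hpdf : ∀ i, pd i (f i) x = 2 * u x * pd i u x * pd i w x * (w x)⁻¹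
          + u x ^ 2 * pd i (pd i w) x * (w x)⁻¹ - u x ^ 2 * pd i w x * (pd i w x / w x ^ 2) := by
        intro i
        apply pd_eq ((hfc i).differentiable (by simp) x)
        have d1 : ∀ {g : E2 → ℝ}, ContDiff ℝ (⊤ : ℕ∞) g →
            HasDerivAt (fun t : ℝ => g (x + t • ee i)) (pd i g x) 0 := fun hg =>
          ((hg.differentiable (by simp)) x).hasFDerivAt.hasLineDerivAt (ee i)
        have hne' : w (x + (0:ℝ) • ee i) ≠ 0 := by simpa using hwx.ne'
        refine ((((d1 hu).pow 2).mul (d1 (pd_contDiff (i := i) hw))).mul ((d1 hw).inv hne')).congr_deriv ?_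
        simp
        field_simp
        ring
      rw [hpdf 0, hpdf 1, norm_fderiv_sq]
      have h1 := hΛ x hxΩ
      have h2 : Λ * u x ^ 2 ≤ - (pd 0 (pd 0 w) x + pd 1 (pd 1 w) x) * (w x)⁻¹ * u x ^ 2 := by
        apply mul_le_mul_of_nonneg_right _ (sq_nonneg _)
        rw [← div_eq_mul_inv, le_div_iff₀ hwx]; exact h1
      have h3 := sq_nonneg (pd 0 u x - u x * pd 0 w x * (w x)⁻¹)
      have h4 := sq_nonneg (pd 1 u x - u x * pd 1 w x * (w x)⁻¹)
      have e : ∀ a : ℝ, a / w x ^ 2 = a * (w x)⁻¹ ^ 2 := by intro a; rw [inv_pow]; rfl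
      rw [e, e]
      linarith
    · have h0 : u x = 0 := image_eq_zero_of_notMem_tsupport hx
      have h1 : ∀ i, pd i (f i) x = 0 := by
        intro i
        rw [pd, (hfs i x hx).fderiv_eq]; simp
      rw [h1, h1, h0]
      simp
  calc Λ * ∫ x, u x ^ 2 = ∫ x, Λ * u x ^ 2 := (integral_const_mul _ _).symm
    _ ≤ ∫ x, (‖fderiv ℝ u x‖ ^ 2 - (pd 0 (f 0) x + pd 1 (f 1) x)) := by
        apply integral_mono ((sq_int_integrable hu.continuous hc).const_mul _) _ hpt
        apply Integrable.sub _ ((hi 0).add (hi 1))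
        simp_rw [norm_fderiv_sq]
        exact (hg 0).add (hg 1)
    _ = ∫ x, ‖fderiv ℝ u x‖ ^ 2 := by
        rw [integral_sub, integral_add (hi 0) (hi 1), hInt0, hInt0]
        · simp
        · simp_rw [norm_fderiv_sq]
          exact (hg 0).add (hg 1)
        · exact (hi 0).add (hi 1)


lemma ee_same (x : E2) (t : ℝ) (i : Fin 2) : (x + t • ee i) i = x i + t := by
  simp [ee]

lemma ee_01 (x : E2) (t : ℝ) : (x + t • ee 0) 1 = x 1 := by
  simp [ee]

lemma ee_10 (x : E2) (t : ℝ) : (x + t • ee 1) 0 = x 0 := by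
  simp [ee]

lemma pdl {i : Fin 2} {u : E2 → ℝ} (hu : ContDiff ℝ (⊤ : ℕ∞) u) (x : E2) :
    HasDerivAt (fun t : ℝ => u (x + t • ee i)) (pd i u x) 0 :=
  ((hu.differentiable (by simp)) x).hasFDerivAt.hasLineDerivAt (ee i)

lemma pd_add {i : Fin 2} {u v : E2 → ℝ} (hu : ContDiff ℝ (⊤ : ℕ∞) u) (hv : ContDiff ℝ (⊤ : ℕ∞) v) (x : E2) :
    pd i (fun x => u x + v x) x = pd i u x + pd i v x := by
  apply pd_eq ((hu.add hv).differentiable (by simp) x)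
  exact (pdl hu x).add (pdl hv x)

lemma pd_mul {i : Fin 2} {u v : E2 → ℝ} (hu : ContDiff ℝ (⊤ : ℕ∞) u) (hv : ContDiff ℝ (⊤ : ℕ∞) v) (x : E2) :
    pd i (fun x => u x * v x) x = pd i u x * v x + u x * pd i v x := by
  apply pd_eq ((hu.mul hv).differentiable (by simp) x)
  refine ((pdl hu x).mul (pdl hv x)).congr_deriv ?_
  simp

lemma pd_const_mul {i : Fin 2} {u : E2 → ℝ} (c : ℝ) (hu : ContDiff ℝ (⊤ : ℕ∞) u) (x : E2) :
    pd i (fun x => c * u x) x = c * pd i u x := by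
  apply pd_eq ((contDiff_const.mul hu).differentiable (by simp) x)
  exact (pdl hu x).const_mul c

lemma coord_contDiff (i : Fin 2) : ContDiff ℝ (⊤ : ℕ∞) (fun x : E2 => x i) := by
  exact (EuclideanSpace.proj (𝕜 := ℝ) i).contDiff

/-- squared norm -/
def PP (x : E2) : ℝ := x 0 ^ 2 + x 1 ^ 2
/-- quadrupole -/
def QQ (x : E2) : ℝ := x 0 ^ 2 - x 1 ^ 2

lemma PP_eq (x : E2) : PP x = ‖x‖ ^ 2 := (norm_sq_E2 x).symm

lemma PP_contDiff : ContDiff ℝ (⊤ : ℕ∞) PP := ((coord_contDiff 0).pow 2).add ((coord_contDiff 1).pow 2)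
lemma QQ_contDiff : ContDiff ℝ (⊤ : ℕ∞) QQ := ((coord_contDiff 0).pow 2).sub ((coord_contDiff 1).pow 2)

lemma PP_line (i : Fin 2) (x : E2) : HasDerivAt (fun t : ℝ => PP (x + t • ee i)) (2 * x i) 0 := by
  have h : HasDerivAt (fun t : ℝ => x i + t) 1 0 := (hasDerivAt_id (0:ℝ)).const_add (x i)
  have h2 := h.pow 2
  fin_cases i
  · simp only [PP, Fin.zero_eta, ee_same, ee_01]
    refine (h2.add_const (x 1 ^ 2)).congr_deriv ?_
    simp
  · simp only [PP, Fin.mk_one, ee_same, ee_10]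
    refine (h2.const_add (x 0 ^ 2)).congr_deriv ?_
    simp

lemma QQ_line0 (x : E2) : HasDerivAt (fun t : ℝ => QQ (x + t • ee 0)) (2 * x 0) 0 := by
  have h : HasDerivAt (fun t : ℝ => x 0 + t) 1 0 := (hasDerivAt_id (0:ℝ)).const_add (x 0)
  simp only [QQ, ee_same, ee_01]
  refine ((h.pow 2).sub_const (x 1 ^ 2)).congr_deriv ?_
  simp

lemma QQ_line1 (x : E2) : HasDerivAt (fun t : ℝ => QQ (x + t • ee 1)) (-(2 * x 1)) 0 := by
  have h : HasDerivAt (fun t : ℝ => x 1 + t) 1 0 := (hasDerivAt_id (0:ℝ)).const_add (x 1)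
  simp only [QQ, ee_same, ee_10]
  refine ((h.pow 2).const_sub (x 0 ^ 2)).congr_deriv ?_
  simp

lemma pd_PP (i : Fin 2) (x : E2) : pd i PP x = 2 * x i :=
  pd_eq (PP_contDiff.differentiable (by simp) x) (PP_line i x)
lemma pd_QQ0 (x : E2) : pd 0 QQ x = 2 * x 0 :=
  pd_eq (QQ_contDiff.differentiable (by simp) x) (QQ_line0 x)
lemma pd_QQ1 (x : E2) : pd 1 QQ x = -(2 * x 1) :=
  pd_eq (QQ_contDiff.differentiable (by simp) x) (QQ_line1 x)
lemma pd_coord (i : Fin 2) (x : E2) : pd i (fun x : E2 => x i) x = 1 := by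
  apply pd_eq ((coord_contDiff i).differentiable (by simp) x)
  simp only [ee_same]
  exact (hasDerivAt_id (0:ℝ)).const_add (x i)
lemma pd_coord10 (x : E2) : pd 1 (fun x : E2 => x 0) x = 0 := by
  apply pd_eq ((coord_contDiff 0).differentiable (by simp) x)
  simp only [ee_10]
  exact hasDerivAt_const _ _

/-- composed radial function -/
def RB (S : ℝ) (n : ℕ) (x : E2) : ℝ := bf n (S * PP x)

lemma RB_contDiff (S : ℝ) (n : ℕ) : ContDiff ℝ (⊤ : ℕ∞) (RB S n) :=
  (bf_contDiff n).comp (contDiff_const.mul PP_contDiff)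

lemma pd_RB (S : ℝ) (n : ℕ) (i : Fin 2) (x : E2) : pd i (RB S n) x = -(2 * S) * (x i * RB S (n + 1) x) := by
  apply pd_eq ((RB_contDiff S n).differentiable (by simp) x)
  have h1 : HasDerivAt (fun t : ℝ => S * PP (x + t • ee i)) (S * (2 * x i)) 0 := (PP_line i x).const_mul S
  have h2 := (bf_hasDerivAt n (S * PP (x + (0:ℝ) • ee i))).comp 0 h1
  refine h2.congr_deriv ?_
  simp [RB]
  ring

lemma pd2_RB (S : ℝ) (n : ℕ) (i : Fin 2) (x : E2) :
    pd i (pd i (RB S n)) x = -(2 * S) * (RB S (n + 1) x - (2 * S) * x i ^ 2 * RB S (n + 2) x) := by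
  have e : pd i (RB S n) = fun x => -(2 * S) * (x i * RB S (n + 1) x) := by
    ext x; exact pd_RB S n i x
  rw [e, pd_const_mul _ ((coord_contDiff i).mul (RB_contDiff S (n+1))),
    pd_mul (coord_contDiff i) (RB_contDiff S (n+1)), pd_coord, pd_RB]
  ring

lemma RB_rec (S : ℝ) (n : ℕ) (x : E2) :
    S * PP x * RB S (n + 2) x = ((n : ℝ) + 1) * RB S (n + 1) x - RB S n x := bf_rec n (S * PP x)

lemma lap_RB0 (S : ℝ) (x : E2) :
    pd 0 (pd 0 (RB S 0)) x + pd 1 (pd 1 (RB S 0)) x = -(4 * S) * RB S 0 x := by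
  rw [pd2_RB, pd2_RB]
  have := RB_rec S 0 x
  simp only [PP, Nat.cast_zero, zero_add, one_mul] at this ⊢
  linear_combination (4 * S) * this

/-- quadrupole eigenfunction -/
def QB (S : ℝ) (x : E2) : ℝ := QQ x * RB S 2 x

lemma QB_contDiff (S : ℝ) : ContDiff ℝ (⊤ : ℕ∞) (QB S) := QQ_contDiff.mul (RB_contDiff S 2)

lemma lap_QB (S : ℝ) (x : E2) :
    pd 0 (pd 0 (QB S)) x + pd 1 (pd 1 (QB S)) x = -(4 * S) * QB S x := by
  have hA : ContDiff ℝ (⊤ : ℕ∞) (fun x : E2 => x 0 * RB S 2 x) := (coord_contDiff 0).mul (RB_contDiff S 2)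
  have hB : ContDiff ℝ (⊤ : ℕ∞) (fun x : E2 => x 1 * RB S 2 x) := (coord_contDiff 1).mul (RB_contDiff S 2)
  have hC : ∀ i, ContDiff ℝ (⊤ : ℕ∞) (pd i (RB S 2)) := fun i => pd_contDiff (RB_contDiff S 2)
  have e0 : pd 0 (QB S) = fun x => 2 * (x 0 * RB S 2 x) + QQ x * pd 0 (RB S 2) x := by
    ext x
    unfold QB
    rw [pd_mul QQ_contDiff (RB_contDiff S 2), pd_QQ0]; ring
  have e1 : pd 1 (QB S) = fun x => (-2) * (x 1 * RB S 2 x) + QQ x * pd 1 (RB S 2) x := by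
    ext x
    unfold QB
    rw [pd_mul QQ_contDiff (RB_contDiff S 2), pd_QQ1]; ring
  rw [e0, e1, pd_add (contDiff_const.mul hA) (QQ_contDiff.mul (hC 0)),
    pd_add (contDiff_const.mul hB) (QQ_contDiff.mul (hC 1)), pd_const_mul _ hA, pd_const_mul _ hB,
    pd_mul (coord_contDiff 0) (RB_contDiff S 2), pd_mul (coord_contDiff 1) (RB_contDiff S 2),
    pd_mul QQ_contDiff (hC 0), pd_mul QQ_contDiff (hC 1), pd_coord, pd_coord, pd_QQ0, pd_QQ1,
    pd2_RB, pd2_RB, pd_RB, pd_RB]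
  have := RB_rec S 2 x
  simp only [PP, QQ, QB, Nat.reduceAdd, Nat.cast_ofNat] at this ⊢
  linear_combination (4 * S) * (x 0 ^ 2 - x 1 ^ 2) * this

/-- ellipse -/
def Ell (m : ℝ) : Set E2 := {x | (x 0 / m) ^ 2 + (m * x 1) ^ 2 < 1}

lemma Ell_open (m : ℝ) : IsOpen (Ell m) := by
  apply isOpen_lt _ continuous_const
  have h0 := (coord_contDiff 0).continuous
  have h1 := (coord_contDiff 1).continuous
  fun_prop

lemma Ell_nonempty (m : ℝ) : (Ell m).Nonempty := ⟨0, by simp [Ell]⟩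

lemma ClEll_compact {m : ℝ} (hm : 1 ≤ m) : IsCompact {x : E2 | (x 0 / m) ^ 2 + (m * x 1) ^ 2 ≤ 1} := by
  apply Metric.isCompact_of_isClosed_isBounded
  · apply isClosed_le _ continuous_const
    have h0 := (coord_contDiff 0).continuous
    have h1 := (coord_contDiff 1).continuous
    fun_prop
  · apply (Metric.isBounded_closedBall (x := (0:E2)) (r := m)).subset
    intro x hx
    simp only [mem_ofPred_eq] at hx
    rw [Metric.mem_closedBall, dist_zero_right]
    apply le_of_sq_le_sq _ (by linarith)
    rw [norm_sq_E2]
    have h1 : x 0 ^ 2 = m ^ 2 * (x 0 / m) ^ 2 := by field_simp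
    have h2 : x 1 ^ 2 ≤ m ^ 2 * (m * x 1) ^ 2 := by
      have : 1 ≤ m ^ 4 := one_le_pow₀ hm
      nlinarith [sq_nonneg (x 1)]
    nlinarith [sq_nonneg m]

lemma ell_strict {S b α m : ℝ} (hS : 1 < S) (hm : 1 ≤ m) (hm1 : α - b = (m ^ 2)⁻¹) (hm2 : α + b = m ^ 2)
    (hell : ∀ c, |c| ≤ 1 → ∀ s, 0 ≤ s → s * (α - b * c) ≤ S →
        0 < bf 0 s + S * b * c * (s * bf 2 s)) : 4 * S < dEig1 (Ell m) := by
  set w : E2 → ℝ := fun x => RB S 0 x + S * b * S * QB S x with hw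
  have hwc : ContDiff ℝ (⊤ : ℕ∞) w := (RB_contDiff S 0).add (contDiff_const.mul (QB_contDiff S))
  have hpos : ∀ x ∈ {x : E2 | (x 0 / m) ^ 2 + (m * x 1) ^ 2 ≤ 1}, 0 < w x := by
    intro x hx
    simp only [mem_ofPred_eq] at hx
    have hP : 0 ≤ PP x := by unfold PP; positivity
    have hx' : α * PP x - b * QQ x ≤ 1 := by
      have : α * PP x - b * QQ x = (x 0 / m) ^ 2 + (m * x 1) ^ 2 := by
        unfold PP QQ
        rw [div_pow, mul_pow, div_eq_mul_inv, ← hm1, ← hm2]; ring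
      linarith
    rcases hP.eq_or_lt with h0 | h0
    · have := hell 0 (by simp) 0 le_rfl (by linarith)
      have hq : QQ x = 0 := by
        unfold PP at h0; unfold QQ
        have := sq_nonneg (x 0); have := sq_nonneg (x 1)
        linarith
      simp only [hw, RB, QB, ← h0, hq]
      simpa using this
    · have hc : |QQ x / PP x| ≤ 1 := by
        rw [abs_div, abs_of_pos h0, div_le_one h0, abs_le]
        unfold QQ PP
        constructor <;> nlinarith [sq_nonneg (x 0), sq_nonneg (x 1)]
      have := hell _ hc (S * PP x) (by positivity) (by
        have e : S * PP x * (α - b * (QQ x / PP x)) = S * (α * PP x - b * QQ x) := by field_simp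
        rw [e]; nlinarith)
      simp only [hw, RB, QB]
      have e : S * b * (QQ x / PP x) * (S * PP x * bf 2 (S * PP x)) = S * b * S * (QQ x * bf 2 (S * PP x)) := by
        field_simp
      rw [e] at this
      exact this
  have hcomp := ClEll_compact hm
  have hne : ({x : E2 | (x 0 / m) ^ 2 + (m * x 1) ^ 2 ≤ 1}).Nonempty := ⟨0, by simp⟩
  obtain ⟨x₁, hx₁, hmin⟩ := hcomp.exists_isMinOn hne hwc.continuous.continuousOn
  obtain ⟨x₂, hx₂, hmax⟩ := hcomp.exists_isMaxOn hne hwc.continuous.continuousOn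
  set δ := w x₁ / 2 with hδ
  set M := w x₂ with hM
  have hδ0 : 0 < δ := by have := hpos x₁ hx₁; rw [hδ]; linarith
  have hδM : 2 * δ ≤ M := by
    have : w x₁ ≤ w x₂ := hmin hx₂
    rw [hδ]; linarith
  have hMδ : 0 < M - δ := by linarith
  have hlt : 4 * S < 4 * S * (M / (M - δ)) := by
    have : 1 < M / (M - δ) := by rw [lt_div_iff₀ hMδ]; linarith
    nlinarith
  refine lt_of_lt_of_le hlt ?_
  have hw' : ContDiff ℝ (⊤ : ℕ∞) (fun x => w x + (-δ)) := hwc.add contDiff_const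
  apply barta (Ell_open m) (Ell_nonempty m) hw'
  · intro x hx
    have : w x₁ ≤ w x := hmin (show x ∈ {x : E2 | (x 0 / m) ^ 2 + (m * x 1) ^ 2 ≤ 1} from by
      simp only [Ell, mem_ofPred_eq] at hx ⊢; exact hx.le)
    rw [hδ] at hδ0 ⊢; linarith
  · intro x hx
    have hx' : x ∈ {x : E2 | (x 0 / m) ^ 2 + (m * x 1) ^ 2 ≤ 1} := by
      simp only [Ell, mem_ofPred_eq] at hx ⊢; exact hx.le
    have hxM : w x ≤ M := hmax hx'
    have e : ∀ i, pd i (fun x => w x + (-δ)) = fun x => pd i (RB S 0) x + S * b * S * pd i (QB S) x := by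
      intro i; ext x
      rw [pd_add hwc contDiff_const, hw, pd_add (RB_contDiff S 0) (contDiff_const.mul (QB_contDiff S)),
        pd_const_mul _ (QB_contDiff S)]
      simp [pd]
    rw [e, e, pd_add (pd_contDiff (RB_contDiff S 0)) (contDiff_const.mul (pd_contDiff (QB_contDiff S))),
      pd_add (pd_contDiff (RB_contDiff S 0)) (contDiff_const.mul (pd_contDiff (QB_contDiff S))),
      pd_const_mul _ (pd_contDiff (QB_contDiff S)), pd_const_mul _ (pd_contDiff (QB_contDiff S))]
    have l1 := lap_RB0 S x
    have l2 := lap_QB S x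
    have l3 : -(pd 0 (pd 0 (RB S 0)) x + S * b * S * pd 0 (pd 0 (QB S)) x +
      (pd 1 (pd 1 (RB S 0)) x + S * b * S * pd 1 (pd 1 (QB S)) x)) = 4 * S * w x := by
      rw [hw]
      simp only
      linear_combination (-1 : ℝ) * l1 - S * b * S * l2
    rw [l3, mul_assoc]
    have : M / (M - δ) * (w x + -δ) ≤ w x := by
      rw [div_mul_eq_mul_div, div_le_iff₀ hMδ]
      have := mul_le_mul_of_nonneg_left hxM hδ0.le
      linarith
    exact mul_le_mul_of_nonneg_left this (by linarith)


lemma caccioppoli {F χ : E2 → ℝ} {Λ : ℝ} (hF : ContDiff ℝ (⊤ : ℕ∞) F) (hχ : ContDiff ℝ (⊤ : ℕ∞) χ)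
    (hc : HasCompactSupport χ) (hlap : ∀ x, pd 0 (pd 0 F) x + pd 1 (pd 1 F) x = -Λ * F x) :
    ∫ x, ‖fderiv ℝ (fun x => F x * χ x) x‖ ^ 2 = Λ * (∫ x, (F x * χ x) ^ 2)
      + ∫ x, F x ^ 2 * ‖fderiv ℝ χ x‖ ^ 2 := by
  set f : Fin 2 → E2 → ℝ := fun i x => F x * (χ x * (χ x * pd i F x)) with hf
  have hfc : ∀ i, ContDiff ℝ (⊤ : ℕ∞) (f i) := fun i => hF.mul (hχ.mul (hχ.mul (pd_contDiff hF)))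
  have hfcs : ∀ i, HasCompactSupport (f i) := by
    intro i
    apply hc.mono
    intro x hx
    simp only [Function.mem_support, hf] at hx ⊢
    intro h
    simp [h] at hx
  have hInt0 : ∀ i, ∫ x, pd i (f i) x = 0 := fun i =>
    integral_pd_zero ((hfc i).of_le (by exact_mod_cast le_top)) (hfcs i)
  have hi : ∀ i, Integrable (pd i (f i)) := fun i =>
    (pd_contDiff (hfc i)).continuous.integrable_of_hasCompactSupport (pd_hasCompactSupport (hfcs i))
  have hFχ : ContDiff ℝ (⊤ : ℕ∞) (fun x => F x * χ x) := hF.mul hχ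
  have hFχc : HasCompactSupport (fun x => F x * χ x) := hc.mul_left
  have i1 := sq_int_integrable hFχ.continuous hFχc
  have i2 : Integrable (fun x => F x ^ 2 * ‖fderiv ℝ χ x‖ ^ 2) := by
    have : ∀ i, Integrable (fun x => (F x * pd i χ x) ^ 2) := fun i =>
      sq_int_integrable (hF.mul (pd_contDiff (i := i) hχ)).continuous (pd_hasCompactSupport hc).mul_left
    refine ((this 0).add (this 1)).congr (Eventually.of_forall fun x => ?_)
    simp only [Pi.add_apply, norm_fderiv_sq]; ring
  have hpt : ∀ x, ‖fderiv ℝ (fun x => F x * χ x) x‖ ^ 2 = (Λ * (F x * χ x) ^ 2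
      + F x ^ 2 * ‖fderiv ℝ χ x‖ ^ 2) + (pd 0 (f 0) x + pd 1 (f 1) x) := by
    intro x
    have e : ∀ i, pd i (f i) x = pd i F x * (χ x * (χ x * pd i F x)) + F x * (pd i χ x * (χ x * pd i F x)
        + χ x * (pd i χ x * pd i F x + χ x * pd i (pd i F) x)) := by
      intro i
      rw [hf]
      simp only
      rw [pd_mul hF (hχ.mul (hχ.mul (pd_contDiff hF))), pd_mul hχ (hχ.mul (pd_contDiff hF)),
        pd_mul hχ (pd_contDiff hF)]
    rw [e, e, norm_fderiv_sq, norm_fderiv_sq, pd_mul hF hχ, pd_mul hF hχ]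
    linear_combination (-F x * χ x ^ 2) * hlap x
  simp_rw [hpt]
  have i12 : Integrable (fun x => Λ * (F x * χ x) ^ 2 + F x ^ 2 * ‖fderiv ℝ χ x‖ ^ 2) :=
    (i1.const_mul _).add i2
  have i34 : Integrable (fun x => pd 0 (f 0) x + pd 1 (f 1) x) := (hi 0).add (hi 1)
  rw [integral_add i12 i34, integral_add (hi 0) (hi 1), hInt0, hInt0,
    integral_add (i1.const_mul _) i2, integral_const_mul]
  simp

/-- cutoff -/
def chi (η : ℝ) (x : E2) : ℝ := Real.smoothTransition ((1 - PP x) / η - 1)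

lemma chi_contDiff (η : ℝ) : ContDiff ℝ (⊤ : ℕ∞) (chi η) :=
  Real.smoothTransition.contDiff.comp (((contDiff_const.sub PP_contDiff).div_const η).sub contDiff_const)

lemma chi_tsupport {η : ℝ} (hη : 0 < η) : tsupport (chi η) ⊆ Metric.closedBall 0 (Real.sqrt (1 - η)) := by
  apply closure_minimal _ Metric.isClosed_closedBall
  intro x hx
  simp only [Function.mem_support, chi] at hx
  rw [mem_closedBall_zero_iff]
  apply Real.le_sqrt_of_sq_le
  rw [← PP_eq]
  by_contra h
  push Not at h
  apply hx
  apply Real.smoothTransition.zero_of_nonpos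
  rw [sub_nonpos, div_le_one hη]; linarith

lemma chi_pd {η : ℝ} (i : Fin 2) (x : E2) :
    pd i (chi η) x = deriv Real.smoothTransition ((1 - PP x) / η - 1) * (-(2 * x i) / η) := by
  apply pd_eq ((chi_contDiff η).differentiable (by simp) x)
  have h1 : HasDerivAt (fun t : ℝ => (1 - PP (x + t • ee i)) / η - 1) (-(2 * x i) / η) 0 :=
    (((PP_line i x).const_sub 1).div_const η).sub_const 1
  have h2 : HasDerivAt Real.smoothTransition (deriv Real.smoothTransition ((1 - PP x) / η - 1))
      ((1 - PP (x + (0:ℝ) • ee i)) / η - 1) := by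
    have := (Real.smoothTransition.contDiff (n := 1)).differentiable (by simp) ((1 - PP x) / η - 1)
    simpa using this.hasDerivAt
  exact h2.comp (0:ℝ) h1

lemma dT_zero {z : ℝ} (hz : z < 0 ∨ 1 < z) : deriv Real.smoothTransition z = 0 := by
  rcases hz with h | h
  · have : Real.smoothTransition =ᶠ[nhds z] fun _ => 0 := by
      filter_upwards [Iio_mem_nhds h] with y hy
      exact Real.smoothTransition.zero_of_nonpos (le_of_lt hy)
    rw [this.deriv_eq]; simp
  · have : Real.smoothTransition =ᶠ[nhds z] fun _ => 1 := by
      filter_upwards [Ioi_mem_nhds h] with y hy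
      exact Real.smoothTransition.one_of_one_le (le_of_lt hy)
    rw [this.deriv_eq]; simp

lemma dT_bdd : ∃ C, 0 ≤ C ∧ ∀ z, |deriv Real.smoothTransition z| ≤ C := by
  have hc : Continuous (deriv Real.smoothTransition) :=
    (Real.smoothTransition.contDiff (n := 1)).continuous_deriv (by simp)
  obtain ⟨C, hC⟩ := isCompact_Icc.exists_bound_of_continuousOn (hc.continuousOn (s := Icc 0 1))
  refine ⟨|C|, abs_nonneg _, fun z => ?_⟩
  by_cases hz : z ∈ Icc (0:ℝ) 1
  · exact (hC z hz).trans (le_abs_self C)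
  · rw [dT_zero]
    · simp
    · simp only [mem_Icc, not_and_or, not_le] at hz; exact hz

lemma bf0_lip {S : ℝ} (hS : 0 < S) (hz : bf 0 S = 0) : ∃ L, 0 ≤ L ∧ ∀ s ∈ Icc 0 S, |bf 0 s| ≤ L * (S - s) := by
  obtain ⟨C, hC⟩ := isCompact_Icc.exists_bound_of_continuousOn ((bf_continuous 1).continuousOn (s := Icc 0 S))
  refine ⟨|C|, abs_nonneg _, fun s hs => ?_⟩
  have := (convex_Icc (0:ℝ) S).norm_image_sub_le_of_norm_hasDerivWithin_le (f := bf 0) (f' := fun s => - bf 1 s) (C := |C|)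
    (fun x hx => (bf_hasDerivAt 0 x).hasDerivWithinAt)
    (fun x hx => by rw [norm_neg]; exact (hC x hx).trans (le_abs_self C)) hs (right_mem_Icc.2 hS.le)
  rw [hz, zero_sub, norm_neg, Real.norm_eq_abs, Real.norm_eq_abs, abs_of_nonneg (sub_nonneg.2 hs.2)] at this
  exact this

lemma mem_unitDisc (x : E2) : x ∈ unitDisc ↔ PP x < 1 := by
  rw [unitDisc, mem_ball_zero_iff, PP_eq]
  constructor
  · intro h; nlinarith [norm_nonneg x]
  · intro h; nlinarith [norm_nonneg x]

lemma chi_err {S : ℝ} (hS : 1 < S) (hz : bf 0 S = 0) :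
    Tendsto (fun n : ℕ => ∫ x, RB S 0 x ^ 2 * ‖fderiv ℝ (chi (1 / ((n:ℝ) + 4))) x‖ ^ 2) atTop (nhds 0) := by
  obtain ⟨C, hC0, hC⟩ := dT_bdd
  obtain ⟨L, hL0, hL⟩ := bf0_lip (by linarith) hz
  have hη : ∀ n : ℕ, 0 < 1 / ((n:ℝ) + 4) := fun n => by positivity
  have key : ∀ (n : ℕ) (x : E2), RB S 0 x ^ 2 * ‖fderiv ℝ (chi (1 / ((n:ℝ) + 4))) x‖ ^ 2
      = RB S 0 x ^ 2 * (deriv Real.smoothTransition ((1 - PP x) / (1 / ((n:ℝ) + 4)) - 1) ^ 2 * (4 * PP x / (1 / ((n:ℝ) + 4)) ^ 2)) := by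
    intro n x
    rw [norm_fderiv_sq, chi_pd, chi_pd]
    unfold PP
    ring
  have h0 : (0:ℝ) = ∫ x : E2, (0:ℝ) := by simp
  rw [h0]
  apply tendsto_integral_of_dominated_convergence (unitDisc.indicator fun _ => 16 * (L * S) ^ 2 * C ^ 2)
  · intro n
    apply Continuous.aestronglyMeasurable
    exact ((RB_contDiff S 0).continuous.pow 2).mul
      (((chi_contDiff _).continuous_fderiv (by simp)).norm.pow 2)
  · rw [integrable_indicator_iff (show MeasurableSet unitDisc from Metric.isOpen_ball.measurableSet)]
    exact integrableOn_const (by exact (measure_ball_lt_top).ne)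
  · intro n
    refine Eventually.of_forall fun x => ?_
    rw [key]
    set η := 1 / ((n:ℝ) + 4) with hηd
    have hη0 : 0 < η := hη n
    have hP0 : 0 ≤ PP x := by unfold PP; positivity
    rw [Real.norm_of_nonneg (by positivity)]
    by_cases hzz : (1 - PP x) / η - 1 < 0 ∨ 1 < (1 - PP x) / η - 1
    · rw [dT_zero hzz]
      simp only [ne_eq, OfNat.ofNat_ne_zero, not_false_eq_true, zero_pow, zero_mul, mul_zero]
      exact indicator_nonneg (fun _ _ => by positivity) x
    · push Not at hzz
      obtain ⟨h1, h2⟩ := hzz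
      rw [sub_nonneg, le_div_iff₀ hη0] at h1
      rw [sub_le_iff_le_add, div_le_iff₀ hη0] at h2
      have hx : x ∈ unitDisc := by rw [mem_unitDisc]; linarith
      rw [indicator_of_mem hx]
      have e1 : |RB S 0 x| ≤ L * S * (2 * η) := by
        have := hL (S * PP x) ⟨by positivity, by nlinarith⟩
        refine this.trans ?_
        have : L * (S - S * PP x) = L * S * (1 - PP x) := by ring
        rw [this]
        apply mul_le_mul_of_nonneg_left _ (by positivity)
        linarith
      have e2 : RB S 0 x ^ 2 ≤ (L * S * (2 * η)) ^ 2 := sq_le_sq' (by linarith [neg_abs_le (RB S 0 x)]) ((le_abs_self _).trans e1)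
      have e3 : deriv Real.smoothTransition ((1 - PP x) / η - 1) ^ 2 ≤ C ^ 2 := by
        have := hC ((1 - PP x) / η - 1)
        exact sq_le_sq' (by linarith [neg_abs_le (deriv Real.smoothTransition ((1 - PP x) / η - 1))]) ((le_abs_self _).trans this)
      calc _ ≤ (L * S * (2 * η)) ^ 2 * (C ^ 2 * (4 * 1 / η ^ 2)) := by
            gcongr; linarith
        _ = 16 * (L * S) ^ 2 * C ^ 2 := by field_simp; ring
  · refine Eventually.of_forall fun x => ?_
    apply tendsto_const_nhds.congr'
    by_cases hx : PP x < 1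
    · obtain ⟨N, hN⟩ := exists_nat_gt (2 / (1 - PP x))
      filter_upwards [eventually_ge_atTop N] with n hn
      rw [key, dT_zero]
      · simp
      right
      rw [lt_sub_iff_add_lt, lt_div_iff₀ (hη n)]
      rw [div_lt_iff₀ (by linarith)] at hN
      have : (N:ℝ) ≤ n := by exact_mod_cast hn
      rw [mul_one_div, div_lt_iff₀ (by positivity)]
      nlinarith
    · push Not at hx
      refine Eventually.of_forall fun n => ?_
      simp only
      rw [key, dT_zero]
      · simp
      left
      have : (1 - PP x) / (1 / ((n:ℝ) + 4)) ≤ 0 := div_nonpos_of_nonpos_of_nonneg (by linarith) (hη n).le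
      linarith

lemma dEig1_disc_le {S : ℝ} (hS : 1 < S) (hz : bf 0 S = 0) (hpos : ∀ s, 0 ≤ s → s < S → 0 < bf 0 s) :
    dEig1 unitDisc ≤ 4 * S := by
  set η : ℕ → ℝ := fun n => 1 / ((n:ℝ) + 4) with hηd
  have hη : ∀ n, 0 < η n := fun n => by rw [hηd]; positivity
  have hη1 : ∀ n, η n ≤ 1 / 4 := fun n => by
    have : (0:ℝ) ≤ n := by positivity
    exact one_div_le_one_div_of_le (by norm_num) (by linarith)
  have hcs : ∀ n, HasCompactSupport (chi (η n)) := fun n =>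
    HasCompactSupport.of_support_subset_isCompact (isCompact_closedBall 0 _) ((subset_tsupport _).trans (chi_tsupport (hη n)))
  have hsq : ∀ n, Integrable (fun x => (RB S 0 x * chi (η n) x) ^ 2) := fun n =>
    sq_int_integrable ((RB_contDiff S 0).mul (chi_contDiff _)).continuous (hcs n).mul_left
  set c := ∫ x, (RB S 0 x * chi (η 0) x) ^ 2 with hc
  have hc0 : 0 < c := by
    apply Continuous.integral_pos_of_hasCompactSupport_nonneg_nonzero (x := (0:E2))
    · exact (((RB_contDiff S 0).mul (chi_contDiff _)).continuous).pow 2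
    · apply ((hcs 0).mul_left (f := RB S 0)).mono
      intro x hx
      simp only [Function.mem_support] at hx ⊢
      intro h
      apply hx; simp [Pi.mul_apply] at h; rcases h with h | h <;> simp [h]
    · intro x; positivity
    · have h1 : RB S 0 0 = 1 := by simp [RB, PP, bf_zero]
      have h2 : chi (η 0) 0 = 1 := by
        apply Real.smoothTransition.one_of_one_le
        simp [PP, hηd]; norm_num
      rw [h1, h2]; norm_num
  have hmono : ∀ n, c ≤ ∫ x, (RB S 0 x * chi (η n) x) ^ 2 := by
    intro n
    apply integral_mono (hsq 0) (hsq n)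
    intro x
    simp only
    rw [mul_pow, mul_pow]
    apply mul_le_mul_of_nonneg_left _ (sq_nonneg _)
    by_cases hx : PP x ≤ 1
    · apply pow_le_pow_left₀ (Real.smoothTransition.nonneg _)
      apply Real.smoothTransition.monotone
      apply sub_le_sub_right
      apply div_le_div_of_nonneg_left (by linarith) (hη n)
      have : η 0 = 1 / 4 := by simp [hηd]
      rw [this]; exact hη1 n
    · push Not at hx
      have : chi (η 0) x = 0 := by
        apply Real.smoothTransition.zero_of_nonpos
        have := div_nonpos_of_nonpos_of_nonneg (by linarith : 1 - PP x ≤ 0) (hη 0).le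
        linarith
      rw [this]; simp only [ne_eq, OfNat.ofNat_ne_zero, not_false_eq_true, zero_pow]; exact sq_nonneg _
  have hle : ∀ n, dEig1 unitDisc ≤ 4 * S + (∫ x, RB S 0 x ^ 2 * ‖fderiv ℝ (chi (η n)) x‖ ^ 2) / c := by
    intro n
    have hp := hc0.trans_le (hmono n)
    have h1 : dEig1 unitDisc ≤ (∫ x, ‖fderiv ℝ (fun x => RB S 0 x * chi (η n) x) x‖ ^ 2) / ∫ x, (RB S 0 x * chi (η n) x) ^ 2 := by
      apply csInf_le (dEig1_bddBelow _)
      refine ⟨fun x => RB S 0 x * chi (η n) x, (RB_contDiff S 0).mul (chi_contDiff _), (hcs n).mul_left, ?_, hp.ne', rfl⟩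
      refine (tsupport_mul_subset_right (f := RB S 0)).trans ((chi_tsupport (hη n)).trans ?_)
      apply Metric.closedBall_subset_ball
      rw [Real.sqrt_lt' one_pos]; linarith [hη n]
    rw [caccioppoli (RB_contDiff S 0) (chi_contDiff _) (hcs n) (lap_RB0 S), add_div, mul_div_cancel_right₀ _ hp.ne'] at h1
    refine h1.trans (add_le_add_right ?_ _)
    apply div_le_div_of_nonneg_left _ hc0 (hmono n)
    exact integral_nonneg fun x => by positivity
  have hlim : Tendsto (fun n => 4 * S + (∫ x, RB S 0 x ^ 2 * ‖fderiv ℝ (chi (η n)) x‖ ^ 2) / c) atTop (nhds (4 * S + 0 / c)) :=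
    ((chi_err hS hz).div_const c).const_add _
  rw [zero_div, add_zero] at hlim
  exact ge_of_tendsto' hlim hle


/-- linear map of a matrix -/
def LM (M : Matrix (Fin 2) (Fin 2) ℝ) : E2 →L[ℝ] E2 := LinearMap.toContinuousLinearMap (Matrix.toEuclideanLin M)

lemma LM_apply (M : Matrix (Fin 2) (Fin 2) ℝ) (x : E2) (i : Fin 2) : LM M x i = M i 0 * x 0 + M i 1 * x 1 := by
  fin_cases i <;> simp [LM, Matrix.toEuclideanLin, Matrix.toLpLin]

lemma E2_ext {x y : E2} (h0 : x 0 = y 0) (h1 : x 1 = y 1) : x = y := by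
  ext i; fin_cases i <;> assumption

lemma LM_mul (M N : Matrix (Fin 2) (Fin 2) ℝ) (x : E2) : LM (M * N) x = LM M (LM N x) := by
  apply E2_ext <;> simp only [LM_apply, Matrix.mul_apply, Fin.sum_univ_two] <;> ring

lemma LM_one (x : E2) : LM 1 x = x := by
  apply E2_ext <;> simp [LM_apply]

/-- homeo -/
def LH (M : Matrix (Fin 2) (Fin 2) ℝ) (h : |M.det| = 1) : E2 ≃ₜ E2 where
  toFun := LM M
  invFun := LM M⁻¹
  left_inv x := by
    have : M.det ≠ 0 := by intro h0; simp [h0] at h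
    rw [← LM_mul, Matrix.nonsing_inv_mul _ (isUnit_iff_ne_zero.2 this), LM_one]
  right_inv x := by
    have : M.det ≠ 0 := by intro h0; simp [h0] at h
    rw [← LM_mul, Matrix.mul_nonsing_inv _ (isUnit_iff_ne_zero.2 this), LM_one]
  continuous_toFun := (LM M).continuous
  continuous_invFun := (LM _).continuous

lemma LM_mp (M : Matrix (Fin 2) (Fin 2) ℝ) (h : |M.det| = 1) : MeasurePreserving (LM M) volume volume := by
  refine ⟨(LM M).continuous.measurable, ?_⟩
  have hd : LinearMap.det (Matrix.toEuclideanLin M) = M.det := by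
    rw [Matrix.toEuclideanLin_eq_toLin_orthonormal, LinearMap.det_toLin]
  have h0 : LinearMap.det (Matrix.toEuclideanLin M) ≠ 0 := by
    rw [hd]; intro h0; simp [h0] at h
  have := Measure.map_linearMap_addHaar_eq_smul_addHaar (μ := (volume : Measure E2)) h0
  rw [hd, abs_inv, h, inv_one, ENNReal.ofReal_one, one_smul] at this
  exact this

lemma LM_emb (M : Matrix (Fin 2) (Fin 2) ℝ) (h : |M.det| = 1) : MeasurableEmbedding (LM M) :=
  (LH M h).measurableEmbedding

lemma LM_int (M : Matrix (Fin 2) (Fin 2) ℝ) (h : |M.det| = 1) (f : E2 → ℝ) : ∫ x, f (LM M x) = ∫ x, f x :=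
  (LM_mp M h).integral_comp (LM_emb M h) f

lemma LM_setInt (M : Matrix (Fin 2) (Fin 2) ℝ) (h : |M.det| = 1) (f : E2 → ℝ) (s : Set E2) :
    ∫ x in (LM M) ⁻¹' s, f (LM M x) = ∫ x in s, f x :=
  (LM_mp M h).setIntegral_preimage_emb (LM_emb M h) f s

lemma LM_pd (M : Matrix (Fin 2) (Fin 2) ℝ) {u : E2 → ℝ} (hu : ContDiff ℝ (⊤ : ℕ∞) u) (i : Fin 2) (x : E2) :
    pd i (fun x => u (LM M x)) x = M 0 i * pd 0 u (LM M x) + M 1 i * pd 1 u (LM M x) := by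
  have h : fderiv ℝ (fun x => u (LM M x)) x = (fderiv ℝ u (LM M x)).comp (LM M) := by
    have := fderiv_comp x (hu.differentiable (by simp) (LM M x)) (LM M).differentiableAt
    rw [(LM M).fderiv] at this
    exact this
  have e : LM M (ee i) = M 0 i • ee 0 + M 1 i • ee 1 := by
    fin_cases i <;> apply E2_ext <;> simp [LM_apply, ee]
  rw [pd, h, ContinuousLinearMap.comp_apply, e]
  simp [pd]

lemma LM_contDiff (M : Matrix (Fin 2) (Fin 2) ℝ) {u : E2 → ℝ} (hu : ContDiff ℝ (⊤ : ℕ∞) u) :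
    ContDiff ℝ (⊤ : ℕ∞) (fun x => u (LM M x)) := hu.comp (LM M).contDiff

/-- stretching matrix -/
def TM (m : ℝ) : Matrix (Fin 2) (Fin 2) ℝ := !![m⁻¹, 0; 0, m]
/-- swap matrix -/
def SM : Matrix (Fin 2) (Fin 2) ℝ := !![0, 1; 1, 0]

lemma TM_det {m : ℝ} (hm : 1 ≤ m) : |(TM m).det| = 1 := by
  have : m ≠ 0 := by positivity
  simp [TM, Matrix.det_fin_two, this]
lemma TMi_det {m : ℝ} (hm : 1 ≤ m) : |(TM m⁻¹).det| = 1 := by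
  have : m ≠ 0 := by positivity
  simp [TM, Matrix.det_fin_two, this]
lemma SM_det : |SM.det| = 1 := by
  simp [SM, Matrix.det_fin_two]

lemma Ell_eq (m : ℝ) : Ell m = LM (TM m) ⁻¹' unitDisc := by
  ext x
  rw [mem_preimage, mem_unitDisc]
  simp only [Ell, mem_ofPred_eq, PP, LM_apply, TM]
  simp [div_eq_inv_mul]

lemma disc_eq {m : ℝ} (hm : 1 ≤ m) : unitDisc = LM (TM m⁻¹) ⁻¹' Ell m := by
  have : m ≠ 0 := by positivity
  ext x
  rw [mem_preimage, mem_unitDisc]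
  simp only [Ell, mem_ofPred_eq, PP, LM_apply, TM]
  simp [this]

lemma disc_swap : unitDisc = LM SM ⁻¹' unitDisc := by
  ext x
  rw [mem_preimage, mem_unitDisc, mem_unitDisc]
  simp [PP, LM_apply, SM, add_comm]

lemma unitDisc_vol : volume unitDisc = ENNReal.ofReal π := by
  rw [unitDisc, EuclideanSpace.volume_ball_fin_two]
  simp

lemma Ell_vol {m : ℝ} (hm : 1 ≤ m) : (volume (Ell m)).toReal = π := by
  rw [Ell_eq, (LM_mp _ (TM_det hm)).measure_preimage_emb (LM_emb _ (TM_det hm)), unitDisc_vol,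
    ENNReal.toReal_ofReal pi_pos.le]

lemma Ell_convex (m : ℝ) : Convex ℝ (Ell m) := by
  rw [Ell_eq]
  exact (convex_ball (0:E2) 1).linear_preimage (LM (TM m)).toLinearMap

lemma Ell_bdd {m : ℝ} (hm : 1 ≤ m) : Bornology.IsBounded (Ell m) := by
  apply (ClEll_compact hm).isBounded.subset
  intro x hx
  simp only [Ell, mem_ofPred_eq] at hx ⊢; exact hx.le

lemma intOn_bdd {s : Set E2} (hs : Bornology.IsBounded s) {f : E2 → ℝ} (hf : Continuous f) : IntegrableOn f s := by
  obtain ⟨R, hR⟩ := hs.subset_closedBall 0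
  exact (hf.continuousOn.integrableOn_compact (isCompact_closedBall 0 R)).mono_set hR

lemma disc_bdd : Bornology.IsBounded unitDisc := Metric.isBounded_ball

lemma TM_pd0 (m : ℝ) {u : E2 → ℝ} (hu : ContDiff ℝ (⊤ : ℕ∞) u) (x : E2) :
    pd 0 (fun x => u (LM (TM m) x)) x = m⁻¹ * pd 0 u (LM (TM m) x) := by
  rw [LM_pd _ hu]; simp [TM]
lemma TM_pd1 (m : ℝ) {u : E2 → ℝ} (hu : ContDiff ℝ (⊤ : ℕ∞) u) (x : E2) :
    pd 1 (fun x => u (LM (TM m) x)) x = m * pd 1 u (LM (TM m) x) := by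
  rw [LM_pd _ hu]; simp [TM]

lemma dEig1_Ell_test {m : ℝ} (hm : 1 ≤ m) {u : E2 → ℝ} (hu : ContDiff ℝ (⊤ : ℕ∞) u) (hc : HasCompactSupport u)
    (hs : tsupport u ⊆ unitDisc) (h0 : (∫ x, u x ^ 2) ≠ 0) :
    dEig1 (Ell m) * (∫ x, u x ^ 2) ≤ (m ^ 2)⁻¹ * (∫ x, pd 0 u x ^ 2) + m ^ 2 * (∫ x, pd 1 u x ^ 2) := by
  have hp : 0 < ∫ x, u x ^ 2 := lt_of_le_of_ne (integral_nonneg fun x => by positivity) (Ne.symm h0)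
  rw [← le_div_iff₀ hp]
  have e1 : ∫ x, (u (LM (TM m) x)) ^ 2 = ∫ x, u x ^ 2 := LM_int _ (TM_det hm) (fun x => u x ^ 2)
  have hg : ∀ i, Integrable (fun x => pd i u x ^ 2) := fun i =>
    sq_int_integrable (pd_contDiff hu).continuous (pd_hasCompactSupport hc)
  have e2 : ∫ x, ‖fderiv ℝ (fun x => u (LM (TM m) x)) x‖ ^ 2
      = (m ^ 2)⁻¹ * (∫ x, pd 0 u x ^ 2) + m ^ 2 * (∫ x, pd 1 u x ^ 2) := by
    rw [← integral_const_mul, ← integral_const_mul, ← integral_add ((hg 0).const_mul _) ((hg 1).const_mul _),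
      ← LM_int _ (TM_det hm) (fun x => (m ^ 2)⁻¹ * pd 0 u x ^ 2 + m ^ 2 * pd 1 u x ^ 2)]
    congr 1; ext x
    rw [norm_fderiv_sq, TM_pd0 _ hu, TM_pd1 _ hu, mul_pow, mul_pow, inv_pow]
  rw [← e1, ← e2]
  apply csInf_le (dEig1_bddBelow _)
  refine ⟨fun x => u (LM (TM m) x), LM_contDiff _ hu, hc.comp_homeomorph (LH _ (TM_det hm)), ?_, by rw [e1]; exact h0, rfl⟩
  have := tsupport_comp_eq_preimage u (LH _ (TM_det hm))
  rw [Ell_eq]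
  exact this.le.trans (preimage_mono hs)

lemma dEig1_Ell_le {m α : ℝ} (hm : 1 ≤ m) (hα : 2 * α = (m ^ 2)⁻¹ + m ^ 2) :
    dEig1 (Ell m) ≤ α * dEig1 unitDisc := by
  have hα0 : 0 < α := by have : 0 < (m ^ 2)⁻¹ + m ^ 2 := by positivity
                         linarith
  rw [← div_le_iff₀' hα0]
  apply le_csInf (dirichlet_set_nonempty Metric.isOpen_ball ⟨0, by simp⟩)
  rintro R ⟨u, hu, hc, hs, h0, rfl⟩
  have hp : 0 < ∫ x, u x ^ 2 := lt_of_le_of_ne (integral_nonneg fun x => by positivity) (Ne.symm h0)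
  rw [div_le_iff₀' hα0, mul_div_assoc', le_div_iff₀ hp]
  have t1 := dEig1_Ell_test hm hu hc hs h0
  have e1 : ∫ x, (u (LM SM x)) ^ 2 = ∫ x, u x ^ 2 := LM_int _ SM_det (fun x => u x ^ 2)
  have t2 := dEig1_Ell_test hm (LM_contDiff SM hu) (hc.comp_homeomorph (LH _ SM_det)) (by
    have := tsupport_comp_eq_preimage u (LH _ SM_det)
    rw [disc_swap]
    exact this.le.trans (preimage_mono hs)) (by rw [e1]; exact h0)
  have p0 : ∀ x, pd 0 (fun x => u (LM SM x)) x = pd 1 u (LM SM x) := fun x => by rw [LM_pd _ hu]; simp [SM]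
  have p1 : ∀ x, pd 1 (fun x => u (LM SM x)) x = pd 0 u (LM SM x) := fun x => by rw [LM_pd _ hu]; simp [SM]
  simp_rw [p0, p1] at t2
  rw [LM_int _ SM_det (fun x => pd 0 u x ^ 2), LM_int _ SM_det (fun x => pd 1 u x ^ 2), e1] at t2
  have hg : ∀ i, Integrable (fun x => pd i u x ^ 2) := fun i =>
    sq_int_integrable (pd_contDiff hu).continuous (pd_hasCompactSupport hc)
  have e3 : ∫ x, ‖fderiv ℝ u x‖ ^ 2 = (∫ x, pd 0 u x ^ 2) + ∫ x, pd 1 u x ^ 2 := by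
    simp_rw [norm_fderiv_sq]; exact integral_add (hg 0) (hg 1)
  rw [e3]
  have : 2 * (α * ((∫ x, pd 0 u x ^ 2) + ∫ x, pd 1 u x ^ 2)) = ((m ^ 2)⁻¹ + m ^ 2) * ((∫ x, pd 0 u x ^ 2) + ∫ x, pd 1 u x ^ 2) := by
    rw [← hα]; ring
  linarith

lemma nEig1_Ell_test {m : ℝ} (hm : 1 ≤ m) {u : E2 → ℝ} (hu : ContDiff ℝ (⊤ : ℕ∞) u)
    (hz : ∫ x in unitDisc, u x = 0) (h0 : (∫ x in unitDisc, u x ^ 2) ≠ 0) :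
    nEig1 (Ell m) * (∫ x in unitDisc, u x ^ 2) ≤ 
      ∫ x in unitDisc, ((m ^ 2)⁻¹ * pd 0 u x ^ 2 + m ^ 2 * pd 1 u x ^ 2) := by
  have hp : 0 < ∫ x in unitDisc, u x ^ 2 := lt_of_le_of_ne (integral_nonneg fun x => by positivity) (Ne.symm h0)
  rw [← le_div_iff₀ hp]
  have e1 : ∫ x in Ell m, (u (LM (TM m) x)) ^ 2 = ∫ x in unitDisc, u x ^ 2 := by
    rw [Ell_eq]; exact LM_setInt _ (TM_det hm) (fun x => u x ^ 2) _
  have e2 : ∫ x in Ell m, ‖fderiv ℝ (fun x => u (LM (TM m) x)) x‖ ^ 2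
      = ∫ x in unitDisc, ((m ^ 2)⁻¹ * pd 0 u x ^ 2 + m ^ 2 * pd 1 u x ^ 2) := by
    rw [Ell_eq, ← LM_setInt _ (TM_det hm) (fun x => (m ^ 2)⁻¹ * pd 0 u x ^ 2 + m ^ 2 * pd 1 u x ^ 2)]
    congr 1; ext x
    rw [norm_fderiv_sq, TM_pd0 _ hu, TM_pd1 _ hu, mul_pow, mul_pow, inv_pow]
  rw [← e1, ← e2]
  apply csInf_le (nEig1_bddBelow _)
  refine ⟨fun x => u (LM (TM m) x), LM_contDiff _ hu, ?_, by rw [e1]; exact h0, rfl⟩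
  rw [Ell_eq, LM_setInt _ (TM_det hm)]; exact hz

lemma nEig1_Ell_ge {m : ℝ} (hm : 1 ≤ m) {u₀ : E2 → ℝ} (hu₀ : ContDiff ℝ (⊤ : ℕ∞) u₀)
    (hz₀ : ∫ x in unitDisc, u₀ x = 0) (h0₀ : (∫ x in unitDisc, u₀ x ^ 2) ≠ 0) :
    (m ^ 2)⁻¹ * nEig1 unitDisc ≤ nEig1 (Ell m) := by
  have hm0 : 0 < m := by linarith
  apply le_csInf
  · refine ⟨_, fun x => u₀ (LM (TM m) x), LM_contDiff _ hu₀, ?_, ?_, rfl⟩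
    · rw [Ell_eq, LM_setInt _ (TM_det hm)]; exact hz₀
    · rw [Ell_eq, LM_setInt _ (TM_det hm) (fun x => u₀ x ^ 2)]; exact h0₀
  rintro R ⟨v, hv, hz, h0, rfl⟩
  have hp : 0 < ∫ x in Ell m, v x ^ 2 := lt_of_le_of_ne (integral_nonneg fun x => by positivity) (Ne.symm h0)
  rw [le_div_iff₀ hp, mul_assoc, inv_mul_le_iff₀ (by positivity)]
  have e1 : ∫ x in unitDisc, (v (LM (TM m⁻¹) x)) ^ 2 = ∫ x in Ell m, v x ^ 2 := by
    rw [disc_eq hm]; exact LM_setInt _ (TMi_det hm) (fun x => v x ^ 2) _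
  have e2 : ∫ x in unitDisc, ‖fderiv ℝ (fun x => v (LM (TM m⁻¹) x)) x‖ ^ 2
      = ∫ x in Ell m, (m ^ 2 * pd 0 v x ^ 2 + (m ^ 2)⁻¹ * pd 1 v x ^ 2) := by
    rw [disc_eq hm, ← LM_setInt _ (TMi_det hm) (fun x => m ^ 2 * pd 0 v x ^ 2 + (m ^ 2)⁻¹ * pd 1 v x ^ 2)]
    congr 1; ext x
    rw [norm_fderiv_sq, TM_pd0 _ hv, TM_pd1 _ hv, mul_pow, mul_pow, inv_inv, inv_pow]
  have t : nEig1 unitDisc ≤ (∫ x in unitDisc, ‖fderiv ℝ (fun x => v (LM (TM m⁻¹) x)) x‖ ^ 2) / ∫ x in unitDisc, (v (LM (TM m⁻¹) x)) ^ 2 := by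
    apply csInf_le (nEig1_bddBelow _)
    refine ⟨fun x => v (LM (TM m⁻¹) x), LM_contDiff _ hv, ?_, by rw [e1]; exact h0, rfl⟩
    rw [disc_eq hm, LM_setInt _ (TMi_det hm)]; exact hz
  rw [e1, e2, le_div_iff₀ hp] at t
  refine t.trans ?_
  rw [← integral_const_mul]
  have c0 : Continuous (pd 0 v) := (pd_contDiff hv).continuous
  have c1 : Continuous (pd 1 v) := (pd_contDiff hv).continuous
  have cf : Continuous (fun x => ‖fderiv ℝ v x‖ ^ 2) := by simp_rw [norm_fderiv_sq]; fun_prop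
  apply integral_mono (intOn_bdd (Ell_bdd hm) (by fun_prop)) (intOn_bdd (Ell_bdd hm) (by fun_prop))
  intro x
  simp only
  rw [norm_fderiv_sq, mul_add]
  have : (m ^ 2)⁻¹ ≤ m ^ 2 := by
    have h1 : 1 ≤ m ^ 2 := one_le_pow₀ hm
    exact (inv_le_one_of_one_le₀ h1).trans h1
  gcongr


/-- polar point -/
def pt (r θ : ℝ) : E2 := WithLp.toLp 2 ![r * cos θ, r * sin θ]

@[simp] lemma pt_0 (r θ : ℝ) : pt r θ 0 = r * cos θ := by simp [pt]
@[simp] lemma pt_1 (r θ : ℝ) : pt r θ 1 = r * sin θ := by simp [pt]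

lemma pt_PP (r θ : ℝ) : PP (pt r θ) = r ^ 2 := by
  simp only [PP, pt_0, pt_1]; nlinarith [sin_sq_add_cos_sq θ]

lemma pt_cont : Continuous (fun p : ℝ × ℝ => pt p.1 p.2) := by
  unfold pt
  apply (PiLp.continuous_toLp 2 (fun _ : Fin 2 => ℝ)).comp
  refine continuous_pi fun i => ?_
  fin_cases i <;> simp <;> fun_prop

lemma E2_int (f : E2 → ℝ) : ∫ x, f x = ∫ p : ℝ × ℝ, f (WithLp.toLp 2 ![p.1, p.2]) := by
  have h1 := (PiLp.volume_preserving_toLp (Fin 2)).integral_comp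
    (MeasurableEquiv.toLp 2 (Fin 2 → ℝ)).measurableEmbedding f
  rw [← h1]
  have h2 := ((volume_preserving_finTwoArrow ℝ).symm _).integral_comp
    (MeasurableEquiv.finTwoArrow (α := ℝ)).symm.measurableEmbedding (fun y => f (WithLp.toLp 2 y))
  rw [← h2]
  rfl

lemma polar_disc {f : E2 → ℝ} (hf : Continuous f) :
    ∫ x in unitDisc, f x = ∫ r in (0:ℝ)..1, ∫ θ in (-π)..π, r * f (pt r θ) := by
  have hm : MeasurableSet unitDisc := Metric.isOpen_ball.measurableSet
  rw [← integral_indicator hm, E2_int, ← integral_comp_polarCoord_symm]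
  have ht : polarCoord.target = Ioi (0:ℝ) ×ˢ Ioo (-π) π := rfl
  rw [ht]
  have hs : ∀ p : ℝ × ℝ, p ∈ Ioi (0:ℝ) ×ˢ Ioo (-π) π →
      p.1 • (unitDisc.indicator f) (WithLp.toLp 2 ![(polarCoord.symm p).1, (polarCoord.symm p).2])
      = ((Iio (1:ℝ) ×ˢ univ).indicator (fun p : ℝ × ℝ => p.1 * f (pt p.1 p.2))) p := by
    intro p hp
    have e : (WithLp.toLp 2 ![(polarCoord.symm p).1, (polarCoord.symm p).2] : E2) = pt p.1 p.2 := by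
      simp [pt, polarCoord_symm_apply]
    rw [e]
    have hp1 : 0 < p.1 := hp.1
    by_cases h : p.1 < 1
    · rw [indicator_of_mem, indicator_of_mem]
      · rfl
      · exact ⟨h, mem_univ _⟩
      · rw [mem_unitDisc, pt_PP]; nlinarith
    · rw [indicator_of_notMem, indicator_of_notMem]
      · simp
      · rintro ⟨h', -⟩; exact h h'
      · rw [mem_unitDisc, pt_PP]; push Not at h ⊢; nlinarith
  rw [setIntegral_congr_fun (measurableSet_Ioi.prod measurableSet_Ioo) hs,
    setIntegral_indicator (measurableSet_Iio.prod MeasurableSet.univ), prod_inter_prod, inter_univ, Ioi_inter_Iio]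
  have hc : Continuous (fun p : ℝ × ℝ => p.1 * f (pt p.1 p.2)) := continuous_fst.mul (hf.comp pt_cont)
  rw [Measure.volume_eq_prod, setIntegral_prod]
  · rw [intervalIntegral.integral_of_le zero_le_one, integral_Ioc_eq_integral_Ioo]
    congr 1
    ext r
    rw [intervalIntegral.integral_of_le (by linarith [pi_pos]), integral_Ioc_eq_integral_Ioo]
  · apply (hc.continuousOn.integrableOn_compact ((isCompact_Icc (a := (0:ℝ)) (b := 1)).prod (isCompact_Icc (a := -π) (b := π)))).mono_set
    exact prod_mono Ioo_subset_Icc_self Ioo_subset_Icc_self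

lemma param_cont {K : ℝ → ℝ → ℝ} (hK : Continuous (Function.uncurry K)) (a b : ℝ) :
    Continuous (fun r => ∫ θ in a..b, K r θ) :=
  intervalIntegral.continuous_parametric_intervalIntegral_of_continuous' hK a b

lemma param_deriv {K K' : ℝ → ℝ → ℝ} (hK : Continuous (Function.uncurry K)) (hK' : Continuous (Function.uncurry K'))
    (hd : ∀ r θ, HasDerivAt (fun r => K r θ) (K' r θ) r) (a b r : ℝ) :
    HasDerivAt (fun r => ∫ θ in a..b, K r θ) (∫ θ in a..b, K' r θ) r := by
  obtain ⟨C, hC⟩ := ((isCompact_Icc (a := r - 1) (b := r + 1)).prod (isCompact_uIcc (a := a) (b := b))).exists_bound_of_continuousOn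
    hK'.continuousOn
  have cK : ∀ r, Continuous (K r) := fun r => hK.comp (Continuous.prodMk_right r)
  have cK' : ∀ r, Continuous (K' r) := fun r => hK'.comp (Continuous.prodMk_right r)
  refine (intervalIntegral.hasDerivAt_integral_of_dominated_loc_of_deriv_le (s := Icc (r - 1) (r + 1)) (bound := fun _ => C)
    (Icc_mem_nhds (by linarith) (by linarith)) (Eventually.of_forall fun x => (cK x).aestronglyMeasurable)
    ((cK r).intervalIntegrable _ _) (cK' r).aestronglyMeasurable ?_ (by simp) ?_).2
  · refine Eventually.of_forall fun t ht x hx => ?_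
    exact hC (x, t) ⟨hx, uIoc_subset_uIcc ht⟩
  · exact Eventually.of_forall fun t _ x _ => hd x t

/-- Dirichlet Poincare inequality on an interval of length pi -/
lemma wirt_half {g g' : ℝ → ℝ} (hg : ∀ x, HasDerivAt g (g' x) x) (hc : Continuous g') {a : ℝ}
    (h0 : g a = 0) (h1 : g (a + π) = 0) :
    ∫ x in a..(a + π), g x ^ 2 ≤ ∫ x in a..(a + π), g' x ^ 2 := by
  have cg : Continuous g := continuous_iff_continuousAt.2 fun x => (hg x).continuousAt
  have hpi := pi_pos
  have key : ∀ l : ℝ, l ∈ Ioo (0:ℝ) 1 → l ^ 2 * (∫ x in a..(a + π), g x ^ 2) ≤ ∫ x in a..(a + π), g' x ^ 2 := by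
    intro l hl
    set y : ℝ → ℝ := fun x => l * (x - (a + π / 2)) with hy
    have hcos : ∀ x ∈ uIcc a (a + π), 0 < cos (y x) := by
      intro x hx
      rw [uIcc_of_le (by linarith)] at hx
      apply cos_pos_of_mem_Ioo
      have := hl.1; have := hl.2; have := hx.1; have := hx.2
      constructor
      · simp only [hy]; nlinarith
      · simp only [hy]; nlinarith
    set w : ℝ → ℝ := fun x => g x ^ 2 * (-(l * tan (y x))) with hw
    set w' : ℝ → ℝ := fun x => 2 * g x * g' x * (-(l * tan (y x))) + g x ^ 2 * (-(l * (1 / cos (y x) ^ 2 * l))) with hw'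
    have hyd : ∀ x, HasDerivAt y l x := by
      intro x
      have := ((hasDerivAt_id x).sub_const (a + π / 2)).const_mul l
      simpa using this
    have hyc : Continuous y := by simp only [hy]; fun_prop
    have hwd : ∀ x ∈ uIcc a (a + π), HasDerivAt w (w' x) x := by
      intro x hx
      have ht := ((hasDerivAt_tan (hcos x hx).ne').comp x (hyd x)).const_mul l
      refine (((hg x).pow 2).mul ht.neg).congr_deriv ?_
      simp [hw']
    have ctan : ContinuousOn (fun x => tan (y x)) (uIcc a (a + π)) := by
      intro x hx
      exact ((continuousAt_tan.2 (hcos x hx).ne').comp hyc.continuousAt).continuousWithinAt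
    have cw' : ContinuousOn w' (uIcc a (a + π)) := by
      apply ContinuousOn.add
      · exact ((continuousOn_const.mul cg.continuousOn).mul hc.continuousOn).mul (continuousOn_const.mul ctan).neg
      · refine (cg.pow 2).continuousOn.mul (ContinuousOn.neg (continuousOn_const.mul (ContinuousOn.mul ?_ continuousOn_const)))
        exact continuousOn_const.div ((Real.continuous_cos.comp hyc).pow 2).continuousOn (fun x hx => (pow_pos (hcos x hx) 2).ne')
    have hInt0 := intervalIntegral.integral_eq_sub_of_hasDerivAt hwd cw'.intervalIntegrable
    have hw0 : w (a + π) - w a = 0 := by simp [hw, h0, h1]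
    rw [hw0] at hInt0
    have i1 : IntervalIntegrable (fun x => l ^ 2 * g x ^ 2) volume a (a + π) := (by fun_prop : Continuous fun x => l ^ 2 * g x ^ 2).intervalIntegrable _ _
    have i2 : IntervalIntegrable (fun x => g' x ^ 2) volume a (a + π) := (by fun_prop : Continuous fun x => g' x ^ 2).intervalIntegrable _ _
    have hle : ∫ x in a..(a + π), (l ^ 2 * g x ^ 2 + w' x) ≤ ∫ x in a..(a + π), g' x ^ 2 := by
      apply intervalIntegral.integral_mono_on (by linarith) (i1.add cw'.intervalIntegrable) i2
      intro x hx
      have hx' : x ∈ uIcc a (a + π) := by rw [uIcc_of_le (by linarith)]; exact hx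
      have e : 1 / cos (y x) ^ 2 = 1 + tan (y x) ^ 2 := by
        rw [one_div, ← inv_one_add_tan_sq (hcos x hx').ne', inv_inv]
      simp only [hw']
      rw [e]
      have := sq_nonneg (g' x + g x * (l * tan (y x)))
      linarith
    rw [intervalIntegral.integral_add i1 cw'.intervalIntegrable, hInt0, intervalIntegral.integral_const_mul] at hle
    linarith
  have hlim : Tendsto (fun l : ℝ => l ^ 2 * (∫ x in a..(a + π), g x ^ 2)) (nhdsWithin 1 (Iio 1)) (nhds (1 ^ 2 * (∫ x in a..(a + π), g x ^ 2))) := by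
    apply Tendsto.mono_left _ nhdsWithin_le_nhds
    exact (by fun_prop : Continuous (fun l : ℝ => l ^ 2 * (∫ x in a..(a + π), g x ^ 2))).tendsto 1
  rw [one_pow, one_mul] at hlim
  apply le_of_tendsto hlim
  filter_upwards [Ioo_mem_nhdsLT (show (0:ℝ) < 1 by norm_num)] with l hl
  exact key l hl

lemma wirtinger {f f' : ℝ → ℝ} (hf : ∀ x, HasDerivAt f (f' x) x) (hc : Continuous f')
    (hp : Function.Periodic f (2 * π)) (hp' : Function.Periodic f' (2 * π)) (h0 : ∫ x in (-π)..π, f x = 0) :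
    ∫ x in (-π)..π, f x ^ 2 ≤ ∫ x in (-π)..π, f' x ^ 2 := by
  have cf : Continuous f := continuous_iff_continuousAt.2 fun x => (hf x).continuousAt
  have hpi := pi_pos
  obtain ⟨a, ha⟩ : ∃ a, f (a + π) - f a = 0 := by
    have hcont : Continuous (fun x => f (x + π) - f x) := by fun_prop
    have e : f (π + π) = f 0 := by have := hp 0; rw [zero_add] at this; rw [← this]; ring_nf
    have : (0:ℝ) ∈ uIcc (f (0 + π) - f 0) (f (π + π) - f π) := by
      rw [e, zero_add, mem_uIcc]
      rcases le_total (f π) (f 0) with h | h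
      · left; constructor <;> linarith
      · right; constructor <;> linarith
    obtain ⟨a, -, ha⟩ := intermediate_value_uIcc (a := 0) (b := π) hcont.continuousOn this
    exact ⟨a, ha⟩
  set c := f a with hcdef
  have shift : ∀ {F : ℝ → ℝ}, Function.Periodic F (2 * π) → Continuous F →
      ∫ x in (-π)..π, F x = (∫ x in a..(a + π), F x) + ∫ x in (a + π)..(a + π + π), F x := by
    intro F hF cF
    rw [intervalIntegral.integral_add_adjacent_intervals (cF.intervalIntegrable _ _) (cF.intervalIntegrable _ _)]
    have := hF.intervalIntegral_add_eq (-π) a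
    rw [show -π + 2 * π = π by ring, show a + 2 * π = a + π + π by ring] at this
    exact this
  have hg : ∀ x, HasDerivAt (fun x => f x - c) (f' x) x := fun x => (hf x).sub_const c
  have w1 := wirt_half hg hc (a := a) (by simp [hcdef]) (by linarith)
  have w2 := wirt_half hg hc (a := a + π) (by linarith) (by
    have := hp a
    rw [show a + 2 * π = a + π + π by ring] at this
    rw [this]; simp [hcdef])
  have s1 := shift (F := fun x => (f x - c) ^ 2) (fun x => by simp only [hp x]) (by fun_prop)
  have s2 := shift (F := fun x => f' x ^ 2) (fun x => by simp only [hp' x]) (by fun_prop)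
  have ex : ∫ x in (-π)..π, (f x - c) ^ 2 = (∫ x in (-π)..π, f x ^ 2) + 2 * π * c ^ 2 := by
    have : ∀ x, (f x - c) ^ 2 = f x ^ 2 + ((-2 * c) * f x + c ^ 2) := fun x => by ring
    simp_rw [this]
    rw [intervalIntegral.integral_add ((by fun_prop : Continuous fun x => f x ^ 2).intervalIntegrable _ _)
      ((by fun_prop : Continuous fun x => (-2 * c) * f x + c ^ 2).intervalIntegrable _ _),
      intervalIntegral.integral_add ((by fun_prop : Continuous fun x => (-2 * c) * f x).intervalIntegrable _ _) (by simp),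
      intervalIntegral.integral_const_mul, h0, intervalIntegral.integral_const]
    simp only [smul_eq_mul]; ring
  have : 0 ≤ 2 * π * c ^ 2 := by positivity
  linarith


lemma picone1d {q q' A M B C : ℝ → ℝ} {κ n : ℝ} (hq : ∀ r ∈ Icc (0:ℝ) 1, HasDerivAt q (q' r) r)
    (hq'c : ContinuousOn q' (Icc 0 1)) (hA : ∀ r, HasDerivAt A (2 * M r) r) (hM : Continuous M)
    (hB : Continuous B) (hC : Continuous C)
    (hric : ∀ r ∈ Icc (0:ℝ) 1, r * q' r = n - 4 * κ * r ^ 2 - q r ^ 2)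
    (hAC : ∀ r ∈ Ioo (0:ℝ) 1, n * A r ≤ r ^ 2 * C r)
    (hquad : ∀ r a b, 0 ≤ a ^ 2 * B r + 2 * a * b * M r + b ^ 2 * A r)
    (h0 : A 0 * q 0 = 0) (h1 : A 1 * q 1 = 0) :
    4 * κ * (∫ r in (0:ℝ)..1, r * A r) ≤ ∫ r in (0:ℝ)..1, r * (B r + C r) := by
  have hAc : Continuous A := continuous_iff_continuousAt.2 fun x => (hA x).continuousAt
  have hqc : ContinuousOn q (Icc 0 1) := fun r hr => (hq r hr).continuousAt.continuousWithinAt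
  have hu : uIcc (0:ℝ) 1 = Icc 0 1 := uIcc_of_le zero_le_one
  have hd : ∀ r ∈ uIcc (0:ℝ) 1, HasDerivAt (fun r => A r * q r) (2 * M r * q r + A r * q' r) r := by
    intro r hr
    rw [hu] at hr
    exact (hA r).mul (hq r hr)
  have cd : ContinuousOn (fun r => 2 * M r * q r + A r * q' r) (uIcc 0 1) := by
    rw [hu]
    exact ((continuous_const.mul hM).continuousOn.mul hqc).add (hAc.continuousOn.mul hq'c)
  have hInt0 := intervalIntegral.integral_eq_sub_of_hasDerivAt hd cd.intervalIntegrable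
  rw [h0, h1, sub_zero] at hInt0
  have i1 : IntervalIntegrable (fun r => 4 * κ * (r * A r)) volume 0 1 :=
    (by fun_prop : Continuous fun r => 4 * κ * (r * A r)).intervalIntegrable _ _
  have i2 : IntervalIntegrable (fun r => r * (B r + C r)) volume 0 1 :=
    (by fun_prop : Continuous fun r => r * (B r + C r)).intervalIntegrable _ _
  have hle : ∫ r in (0:ℝ)..1, (4 * κ * (r * A r) + (2 * M r * q r + A r * q' r)) ≤ ∫ r in (0:ℝ)..1, r * (B r + C r) := by
    apply intervalIntegral.integral_mono_on_of_le_Ioo zero_le_one (i1.add cd.intervalIntegrable) i2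
    intro r hr
    have hr0 := hr.1
    have e1 := hric r ⟨hr.1.le, hr.2.le⟩
    have e2 := hAC r hr
    have e3 := hquad r r (-q r)
    have e4 : A r * (r * q' r) = A r * (n - 4 * κ * r ^ 2 - q r ^ 2) := by rw [e1]
    have : r * (4 * κ * (r * A r) + (2 * M r * q r + A r * q' r)) ≤ r * (r * (B r + C r)) := by
      linarith
    exact le_of_mul_le_mul_left this hr0
  rw [intervalIntegral.integral_add i1 cd.intervalIntegrable, hInt0, intervalIntegral.integral_const_mul] at hle
  linarith

lemma sk_deriv (κ r : ℝ) : HasDerivAt (fun r : ℝ => κ * r ^ 2) (2 * κ * r) r := by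
  refine ((hasDerivAt_pow 2 r).const_mul κ).congr_deriv ?_
  simp; ring

lemma bfk_deriv (κ : ℝ) (n : ℕ) (r : ℝ) : HasDerivAt (fun r : ℝ => bf n (κ * r ^ 2)) (-bf (n + 1) (κ * r ^ 2) * (2 * κ * r)) r := by
  have h := bf_hasDerivAt n (κ * r ^ 2)
  exact HasDerivAt.comp (h := fun r : ℝ => κ * r ^ 2) r h (sk_deriv κ r)

lemma bfk_cont (κ : ℝ) (n : ℕ) : Continuous (fun r : ℝ => bf n (κ * r ^ 2)) := (bf_continuous n).comp (by fun_prop)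

lemma ric1 {κ : ℝ} (hκ : 0 < κ) (hpos : ∀ s, 0 ≤ s → s ≤ κ → 0 < bf 1 s) :
    ∃ q' : ℝ → ℝ, (∀ r ∈ Icc (0:ℝ) 1, HasDerivAt (fun r => 1 - 2 * (κ * r ^ 2) * bf 2 (κ * r ^ 2) / bf 1 (κ * r ^ 2)) (q' r) r) ∧
      ContinuousOn q' (Icc 0 1) ∧
      ∀ r ∈ Icc (0:ℝ) 1, r * q' r = 1 - 4 * κ * r ^ 2 - (1 - 2 * (κ * r ^ 2) * bf 2 (κ * r ^ 2) / bf 1 (κ * r ^ 2)) ^ 2 := by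
  have hne : ∀ r ∈ Icc (0:ℝ) 1, bf 1 (κ * r ^ 2) ≠ 0 := by
    intro r hr
    apply (hpos _ (by positivity) _).ne'
    have : r ^ 2 ≤ 1 := pow_le_one₀ hr.1 hr.2
    nlinarith
  refine ⟨fun r => -(4 * κ * r) * (1 - bf 2 (κ * r ^ 2) / bf 1 (κ * r ^ 2) + κ * r ^ 2 * (bf 2 (κ * r ^ 2) / bf 1 (κ * r ^ 2)) ^ 2), ?_, ?_, ?_⟩
  · intro r hr
    have h := hne r hr
    refine (((((sk_deriv κ r).const_mul 2).mul (bfk_deriv κ 2 r)).div (bfk_deriv κ 1 r) h).const_sub 1).congr_deriv ?_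
    have hrec := bf_rec 1 (κ * r ^ 2)
    norm_num at hrec ⊢
    field_simp
    linear_combination (-4 * r * bf 1 (κ * r ^ 2)) * hrec
  · have c : ContinuousOn (fun r : ℝ => bf 2 (κ * r ^ 2) / bf 1 (κ * r ^ 2)) (Icc 0 1) :=
      (bfk_cont κ 2).continuousOn.div (bfk_cont κ 1).continuousOn hne
    fun_prop
  · intro r hr
    have h := hne r hr
    simp only
    field_simp
    ring

lemma ric0 {κ : ℝ} (hκ : 0 < κ) (hpos : ∀ s, 0 ≤ s → s ≤ κ → 0 < bf 0 s) :
    ∃ q' : ℝ → ℝ, (∀ r ∈ Icc (0:ℝ) 1, HasDerivAt (fun r => 0 - 2 * (κ * r ^ 2) * bf 1 (κ * r ^ 2) / bf 0 (κ * r ^ 2)) (q' r) r) ∧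
      ContinuousOn q' (Icc 0 1) ∧
      ∀ r ∈ Icc (0:ℝ) 1, r * q' r = 0 - 4 * κ * r ^ 2 - (0 - 2 * (κ * r ^ 2) * bf 1 (κ * r ^ 2) / bf 0 (κ * r ^ 2)) ^ 2 := by
  have hne : ∀ r ∈ Icc (0:ℝ) 1, bf 0 (κ * r ^ 2) ≠ 0 := by
    intro r hr
    apply (hpos _ (by positivity) _).ne'
    have : r ^ 2 ≤ 1 := pow_le_one₀ hr.1 hr.2
    nlinarith
  refine ⟨fun r => -(4 * κ * r) * (1 + κ * r ^ 2 * (bf 1 (κ * r ^ 2) / bf 0 (κ * r ^ 2)) ^ 2), ?_, ?_, ?_⟩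
  · intro r hr
    have h := hne r hr
    refine (((((sk_deriv κ r).const_mul 2).mul (bfk_deriv κ 1 r)).div (bfk_deriv κ 0 r) h).const_sub 0).congr_deriv ?_
    have hrec := bf_rec 0 (κ * r ^ 2)
    norm_num at hrec ⊢
    field_simp
    linear_combination (-4 * r * bf 0 (κ * r ^ 2)) * hrec
  · have c : ContinuousOn (fun r : ℝ => bf 1 (κ * r ^ 2) / bf 0 (κ * r ^ 2)) (Icc 0 1) :=
      (bfk_cont κ 1).continuousOn.div (bfk_cont κ 0).continuousOn hne
    fun_prop
  · intro r hr
    have h := hne r hr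
    simp only
    field_simp
    ring

lemma radial {κ : ℝ} (hκ : 0 < κ) (hpos : ∀ s, 0 ≤ s → s ≤ κ → 0 < bf 0 s) {U U' : ℝ → ℝ}
    (hU : ∀ r, HasDerivAt U (U' r) r) (hU' : Continuous U') (hz : ∫ r in (0:ℝ)..1, r * U r = 0) :
    4 * κ * (∫ r in (0:ℝ)..1, r * U r ^ 2) ≤ ∫ r in (0:ℝ)..1, r * U' r ^ 2 := by
  obtain ⟨q', h1, h2, h3⟩ := ric0 hκ hpos
  have cU : Continuous U := continuous_iff_continuousAt.2 fun x => (hU x).continuousAt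
  have := picone1d (A := fun r => (U r - U 1) ^ 2) (M := fun r => (U r - U 1) * U' r) (B := fun r => U' r ^ 2) (C := fun _ => 0)
    h1 h2 (fun r => by
      refine (((hU r).sub_const (U 1)).pow 2).congr_deriv ?_
      simp; ring) (by fun_prop) (by fun_prop) (by fun_prop) h3 (fun r _ => by simp)
      (fun r a b => by have := sq_nonneg (a * U' r + b * (U r - U 1)); linarith) (by simp) (by simp)
  simp only [add_zero] at this
  refine le_trans (mul_le_mul_of_nonneg_left ?_ (by positivity)) this
  have e : ∀ r, r * (U r - U 1) ^ 2 = r * U r ^ 2 + ((-2 * U 1) * (r * U r) + U 1 ^ 2 * r) := fun r => by ring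
  simp_rw [e]
  rw [intervalIntegral.integral_add ((by fun_prop : Continuous fun r => r * U r ^ 2).intervalIntegrable _ _)
      ((by fun_prop : Continuous fun r => (-2 * U 1) * (r * U r) + U 1 ^ 2 * r).intervalIntegrable _ _),
      intervalIntegral.integral_add ((by fun_prop : Continuous fun r => (-2 * U 1) * (r * U r)).intervalIntegrable _ _)
       ((by fun_prop : Continuous fun r => U 1 ^ 2 * r).intervalIntegrable _ _),
      intervalIntegral.integral_const_mul, intervalIntegral.integral_const_mul, hz, integral_id]
  nlinarith [sq_nonneg (U 1)]

lemma pt_eq (r θ : ℝ) : pt r θ = (r * cos θ) • ee 0 + (r * sin θ) • ee 1 := by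
  apply E2_ext <;> simp [ee]

/-- radial derivative -/
def dr (u : E2 → ℝ) (r θ : ℝ) : ℝ := cos θ * pd 0 u (pt r θ) + sin θ * pd 1 u (pt r θ)
/-- tangential derivative -/
def dt (u : E2 → ℝ) (r θ : ℝ) : ℝ := -sin θ * pd 0 u (pt r θ) + cos θ * pd 1 u (pt r θ)

lemma hasDeriv_r {u : E2 → ℝ} (hu : ContDiff ℝ (⊤ : ℕ∞) u) (r θ : ℝ) :
    HasDerivAt (fun r => u (pt r θ)) (dr u r θ) r := by
  have h : HasDerivAt (fun r => pt r θ) (cos θ • ee 0 + sin θ • ee 1) r := by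
    simp_rw [pt_eq]
    have h1 := ((hasDerivAt_id r).mul_const (cos θ)).smul_const (ee 0)
    have h2 := ((hasDerivAt_id r).mul_const (sin θ)).smul_const (ee 1)
    refine (h1.add h2).congr_deriv ?_
    simp
  have := ((hu.differentiable (by simp)) (pt r θ)).hasFDerivAt.comp_hasDerivAt r h
  refine this.congr_deriv ?_
  simp [dr, pd]

lemma hasDeriv_t {u : E2 → ℝ} (hu : ContDiff ℝ (⊤ : ℕ∞) u) (r θ : ℝ) :
    HasDerivAt (fun θ => u (pt r θ)) (r * dt u r θ) θ := by
  have h : HasDerivAt (fun θ => pt r θ) ((r * -sin θ) • ee 0 + (r * cos θ) • ee 1) θ := by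
    simp_rw [pt_eq]
    have h1 := ((hasDerivAt_cos θ).const_mul r).smul_const (ee 0)
    have h2 := ((hasDerivAt_sin θ).const_mul r).smul_const (ee 1)
    exact h1.add h2
  have := ((hu.differentiable (by simp)) (pt r θ)).hasFDerivAt.comp_hasDerivAt θ h
  refine this.congr_deriv ?_
  simp [dt, pd]; ring

lemma dr_dt (u : E2 → ℝ) (r θ : ℝ) : ‖fderiv ℝ u (pt r θ)‖ ^ 2 = dr u r θ ^ 2 + dt u r θ ^ 2 := by
  rw [norm_fderiv_sq, dr, dt]
  linear_combination (-(pd 0 u (pt r θ) ^ 2 + pd 1 u (pt r θ) ^ 2)) * sin_sq_add_cos_sq θ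

lemma variance_id {f : ℝ → ℝ} (hf : Continuous f) {c : ℝ} (hc : ∫ x in (-π)..π, f x = 2 * π * c) :
    ∫ x in (-π)..π, f x ^ 2 = 2 * π * c ^ 2 + ∫ x in (-π)..π, (f x - c) ^ 2 := by
  have : ∀ x, (f x - c) ^ 2 = f x ^ 2 + ((-2 * c) * f x + c ^ 2) := fun x => by ring
  simp_rw [this]
  rw [intervalIntegral.integral_add ((by fun_prop : Continuous fun x => f x ^ 2).intervalIntegrable _ _)
    ((by fun_prop : Continuous fun x => (-2 * c) * f x + c ^ 2).intervalIntegrable _ _),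
    intervalIntegral.integral_add ((by fun_prop : Continuous fun x => (-2 * c) * f x).intervalIntegrable _ _) (by simp),
    intervalIntegral.integral_const_mul, hc, intervalIntegral.integral_const]
  simp only [smul_eq_mul]; ring

lemma pt_per (r θ : ℝ) : pt r (θ + 2 * π) = pt r θ := by simp [pt]

lemma neumann_ineq {κ : ℝ} (hκ : 0 < κ) (hpos0 : ∀ s, 0 ≤ s → s ≤ κ → 0 < bf 0 s)
    (hpos1 : ∀ s, 0 ≤ s → s ≤ κ → 0 < bf 1 s) (hk : bf 1 κ = 2 * κ * bf 2 κ)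
    {u : E2 → ℝ} (hu : ContDiff ℝ (⊤ : ℕ∞) u) (hz : ∫ x in unitDisc, u x = 0) :
    4 * κ * (∫ x in unitDisc, u x ^ 2) ≤ ∫ x in unitDisc, ‖fderiv ℝ u x‖ ^ 2 := by
  have cu := hu.continuous
  have c0 : Continuous (pd 0 u) := (pd_contDiff hu).continuous
  have c1 : Continuous (pd 1 u) := (pd_contDiff hu).continuous
  have hpc : Continuous (fun p : ℝ × ℝ => pt p.1 p.2) := pt_cont
  have cf : Continuous (fun x => ‖fderiv ℝ u x‖ ^ 2) := by simp_rw [norm_fderiv_sq]; fun_prop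
  set h : ℝ → ℝ → ℝ := fun r θ => u (pt r θ) with hh
  have ch : Continuous (Function.uncurry h) := cu.comp hpc
  have cdr : Continuous (Function.uncurry (dr u)) := by
    simp only [Function.uncurry_def, dr]; fun_prop
  have cdt : Continuous (Function.uncurry (dt u)) := by
    simp only [Function.uncurry_def, dt]; fun_prop
  have sl : ∀ {K : ℝ → ℝ → ℝ}, Continuous (Function.uncurry K) → ∀ r, Continuous (K r) := fun hK r => hK.comp (Continuous.prodMk_right r)
  set U : ℝ → ℝ := fun r => (2 * π)⁻¹ * ∫ θ in (-π)..π, h r θ with hUdef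
  set U' : ℝ → ℝ := fun r => (2 * π)⁻¹ * ∫ θ in (-π)..π, dr u r θ with hU'def
  have hpi : π ≠ 0 := pi_ne_zero
  have hUint : ∀ r, ∫ θ in (-π)..π, h r θ = 2 * π * U r := fun r => by simp only [hUdef]; field_simp
  have hU'int : ∀ r, ∫ θ in (-π)..π, dr u r θ = 2 * π * U' r := fun r => by simp only [hU'def]; field_simp
  have hU : ∀ r, HasDerivAt U (U' r) r := fun r =>
    (param_deriv ch cdr (fun r θ => hasDeriv_r hu r θ) (-π) π r).const_mul _
  have cU : Continuous U := continuous_iff_continuousAt.2 fun x => (hU x).continuousAt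
  have cU' : Continuous U' := continuous_const.mul (param_cont cdr _ _)
  set v : ℝ → ℝ → ℝ := fun r θ => h r θ - U r with hv
  set w : ℝ → ℝ → ℝ := fun r θ => dr u r θ - U' r with hw
  have cv : Continuous (Function.uncurry v) := ch.sub (cU.comp continuous_fst)
  have cw : Continuous (Function.uncurry w) := cdr.sub (cU'.comp continuous_fst)
  have hvd : ∀ r θ, HasDerivAt (fun r => v r θ) (w r θ) r := fun r θ => (hasDeriv_r hu r θ).sub (hU r)
  set A : ℝ → ℝ := fun r => ∫ θ in (-π)..π, v r θ ^ 2 with hA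
  set M : ℝ → ℝ := fun r => ∫ θ in (-π)..π, v r θ * w r θ with hM
  set B : ℝ → ℝ := fun r => ∫ θ in (-π)..π, w r θ ^ 2 with hB
  set C : ℝ → ℝ := fun r => ∫ θ in (-π)..π, dt u r θ ^ 2 with hC
  have sq2 : ∀ {K : ℝ → ℝ → ℝ}, Continuous (Function.uncurry K) → Continuous (Function.uncurry (fun r θ => K r θ ^ 2)) := by
    intro K hK
    have hK' : Continuous (fun p : ℝ × ℝ => K p.1 p.2) := hK
    exact (by fun_prop : Continuous fun p : ℝ × ℝ => K p.1 p.2 ^ 2)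
  have cA : Continuous A := param_cont (K := fun r θ => v r θ ^ 2) (sq2 cv) _ _
  have cM : Continuous M := param_cont (K := fun r θ => v r θ * w r θ) (cv.mul cw) _ _
  have cB : Continuous B := param_cont (K := fun r θ => w r θ ^ 2) (sq2 cw) _ _
  have cC : Continuous C := param_cont (K := fun r θ => dt u r θ ^ 2) (sq2 cdt) _ _
  have cvw : Continuous (Function.uncurry (fun r θ => 2 * (v r θ * w r θ))) := by
    have k1 : Continuous (fun p : ℝ × ℝ => v p.1 p.2) := cv
    have k2 : Continuous (fun p : ℝ × ℝ => w p.1 p.2) := cw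
    exact (by fun_prop : Continuous fun p : ℝ × ℝ => 2 * (v p.1 p.2 * w p.1 p.2))
  have hAd : ∀ r, HasDerivAt A (2 * M r) r := by
    intro r
    have := param_deriv (K := fun r θ => v r θ ^ 2) (K' := fun r θ => 2 * (v r θ * w r θ)) (sq2 cv)
      cvw (fun r θ => by
        refine ((hvd r θ).pow 2).congr_deriv ?_
        simp; ring) (-π) π r
    rw [intervalIntegral.integral_const_mul] at this
    exact this
  have hA0 : A 0 = 0 := by
    have hp0 : ∀ θ, pt 0 θ = 0 := fun θ => by apply E2_ext <;> simp
    have : ∀ θ, v 0 θ = 0 := by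
      intro θ
      simp only [hv, hUdef, hh, hp0, intervalIntegral.integral_const, smul_eq_mul]
      field_simp; ring
    simp [hA, this]
  have hAC : ∀ r, A r ≤ r ^ 2 * C r := by
    intro r
    have := wirtinger (f := v r) (f' := fun θ => r * dt u r θ) (fun θ => (hasDeriv_t hu r θ).sub_const (U r))
      (continuous_const.mul (sl cdt r)) (fun θ => by simp only [hv, hh, pt_per])
      (fun θ => by simp only [dt, pt_per, sin_add_two_pi, cos_add_two_pi]) (by
        simp only [hv]
        rw [intervalIntegral.integral_sub ((sl ch r).intervalIntegrable _ _) (by simp), hUint, intervalIntegral.integral_const]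
        simp only [smul_eq_mul]; ring)
    refine this.trans_eq ?_
    simp_rw [mul_pow]
    rw [intervalIntegral.integral_const_mul]
  have hquad : ∀ r a b, 0 ≤ a ^ 2 * B r + 2 * a * b * M r + b ^ 2 * A r := by
    intro r a b
    have cvr := sl cv r
    have cwr := sl cw r
    have : 0 ≤ ∫ θ in (-π)..π, (a * w r θ + b * v r θ) ^ 2 :=
      intervalIntegral.integral_nonneg (by linarith [pi_pos]) fun θ _ => sq_nonneg _
    have e : ∀ θ, (a * w r θ + b * v r θ) ^ 2 = a ^ 2 * w r θ ^ 2 + (2 * a * b * (v r θ * w r θ) + b ^ 2 * v r θ ^ 2) := fun θ => by ring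
    simp_rw [e] at this
    rw [intervalIntegral.integral_add ((by fun_prop : Continuous fun θ => a ^ 2 * w r θ ^ 2).intervalIntegrable _ _)
      ((by fun_prop : Continuous fun θ => 2 * a * b * (v r θ * w r θ) + b ^ 2 * v r θ ^ 2).intervalIntegrable _ _),
      intervalIntegral.integral_add ((by fun_prop : Continuous fun θ => 2 * a * b * (v r θ * w r θ)).intervalIntegrable _ _)
      ((by fun_prop : Continuous fun θ => b ^ 2 * v r θ ^ 2).intervalIntegrable _ _),
      intervalIntegral.integral_const_mul, intervalIntegral.integral_const_mul, intervalIntegral.integral_const_mul] at this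
    simp only [hA, hB, hM]
    linarith
  have hUz : ∫ r in (0:ℝ)..1, r * U r = 0 := by
    rw [polar_disc cu] at hz
    have : ∀ r, ∫ θ in (-π)..π, r * u (pt r θ) = 2 * π * (r * U r) := by
      intro r
      rw [intervalIntegral.integral_const_mul]
      have := hUint r
      simp only [hh] at this
      rw [this]; ring
    simp_rw [this] at hz
    rw [intervalIntegral.integral_const_mul] at hz
    simpa [hpi] using hz
  have R := radial hκ hpos0 hU cU' hUz
  obtain ⟨q', q1, q2, q3⟩ := ric1 hκ hpos1
  have P := picone1d q1 q2 hAd cM cB cC q3 (fun r _ => by rw [one_mul]; exact hAC r) hquad (by rw [hA0, zero_mul]) (by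
    have h1 := hpos1 κ hκ.le le_rfl
    have : 2 * (κ * 1 ^ 2) * bf 2 (κ * 1 ^ 2) / bf 1 (κ * 1 ^ 2) = 1 := by
      rw [one_pow, mul_one, div_eq_one_iff_eq h1.ne', hk]
    rw [this]; simp)
  have L1 : ∫ x in unitDisc, u x ^ 2 = 2 * π * (∫ r in (0:ℝ)..1, r * U r ^ 2) + ∫ r in (0:ℝ)..1, r * A r := by
    rw [polar_disc (f := fun x => u x ^ 2) (by fun_prop), ← intervalIntegral.integral_const_mul,
      ← intervalIntegral.integral_add ((by fun_prop : Continuous fun r => 2 * π * (r * U r ^ 2)).intervalIntegrable _ _)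
        ((by fun_prop : Continuous fun r => r * A r).intervalIntegrable _ _)]
    congr 1; ext r
    rw [intervalIntegral.integral_const_mul, variance_id (sl ch r) (hUint r)]
    simp only [hA, hv]; ring
  have L2 : ∫ x in unitDisc, ‖fderiv ℝ u x‖ ^ 2 = 2 * π * (∫ r in (0:ℝ)..1, r * U' r ^ 2) + ∫ r in (0:ℝ)..1, r * (B r + C r) := by
    rw [polar_disc cf, ← intervalIntegral.integral_const_mul,
      ← intervalIntegral.integral_add ((by fun_prop : Continuous fun r => 2 * π * (r * U' r ^ 2)).intervalIntegrable _ _)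
        ((by fun_prop : Continuous fun r => r * (B r + C r)).intervalIntegrable _ _)]
    congr 1; ext r
    simp_rw [dr_dt]
    have d1 : Continuous (fun θ => dr u r θ) := sl cdr r
    have d2 : Continuous (fun θ => dt u r θ) := sl cdt r
    rw [intervalIntegral.integral_const_mul, intervalIntegral.integral_add ((by fun_prop : Continuous fun θ => dr u r θ ^ 2).intervalIntegrable _ _) ((by fun_prop : Continuous fun θ => dt u r θ ^ 2).intervalIntegrable _ _),
      variance_id (sl cdr r) (hU'int r)]
    simp only [hB, hC, hw]; ring
  rw [L1, L2]
  have : 0 ≤ 2 * π := by positivity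
  have := mul_le_mul_of_nonneg_left R this
  linarith


lemma exists_kappa {S : ℝ} (hS : 1 < S) (hz : bf 0 S = 0) (hpos : ∀ s, 0 ≤ s → s < S → 0 < bf 0 s) :
    ∃ κ, 0 < κ ∧ κ < S ∧ bf 1 κ = 2 * κ * bf 2 κ := by
  have c1 := bf_continuous 1
  have c2 := bf_continuous 2
  have hc : ContinuousOn (fun s => bf 1 s - 2 * s * bf 2 s) (Icc 0 S) := by fun_prop
  have h1 := bf1_pos hpos S (by linarith) le_rfl
  have hr := bf_rec 0 S
  rw [hz] at hr
  norm_num at hr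
  have h0 : bf 1 0 = 1 := by rw [bf_zero]; simp
  obtain ⟨κ, hκ, h⟩ := intermediate_value_Ioo' (by linarith : (0:ℝ) ≤ S) hc
    (show (0:ℝ) ∈ Ioo _ _ from ⟨by linarith, by simp [h0]⟩)
  exact ⟨κ, hκ.1, hκ.2, by simp only at h; linarith⟩

lemma trig_int (a b c : ℝ) : ∫ θ in (-π)..π, (a + b * cos θ ^ 2 + c * cos θ ^ 4) = π * (2 * a + b + 3 / 4 * c) := by
  have hd : ∀ θ ∈ uIcc (-π) π, HasDerivAt (fun θ => a * θ + b * ((θ + sin θ * cos θ) / 2)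
      + c * (sin θ * cos θ ^ 3 / 4 + 3 / 8 * (θ + sin θ * cos θ))) (a + b * cos θ ^ 2 + c * cos θ ^ 4) θ := by
    intro θ _
    have h1 : HasDerivAt (fun θ => sin θ * cos θ) (cos θ * cos θ + sin θ * -sin θ) θ := (hasDerivAt_sin θ).mul (hasDerivAt_cos θ)
    have h2 : HasDerivAt (fun θ => cos θ ^ 3) (((3:ℕ):ℝ) * cos θ ^ 2 * -sin θ) θ := (hasDerivAt_cos θ).pow 3
    have h3 : HasDerivAt (fun θ => sin θ * cos θ ^ 3) _ θ := (hasDerivAt_sin θ).mul h2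
    have h4 : HasDerivAt (fun θ => θ + sin θ * cos θ) _ θ := (hasDerivAt_id θ).add h1
    refine ((((hasDerivAt_id θ).const_mul a).add ((h4.div_const 2).const_mul b)).add
      (((h3.div_const 4).add (h4.const_mul (3/8))).const_mul c)).congr_deriv ?_
    have hs : sin θ ^ 2 = 1 - cos θ ^ 2 := by rw [← sin_sq_add_cos_sq θ]; ring
    push_cast
    linear_combination (-(b / 2) - c * (3 / 8) - 3 / 4 * c * cos θ ^ 2) * hs
  rw [intervalIntegral.integral_eq_sub_of_hasDerivAt hd
    ((by fun_prop : Continuous fun θ : ℝ => a + b * cos θ ^ 2 + c * cos θ ^ 4).intervalIntegrable _ _)]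
  simp; ring

/-- Neumann eigenfunction of the disc -/
def nv (κ : ℝ) (x : E2) : ℝ := x 0 * RB κ 1 x

lemma nv_contDiff (κ : ℝ) : ContDiff ℝ (⊤ : ℕ∞) (nv κ) := (coord_contDiff 0).mul (RB_contDiff κ 1)

lemma RB_pt (κ r θ : ℝ) (n : ℕ) : RB κ n (pt r θ) = bf n (κ * r ^ 2) := by rw [RB, pt_PP]

lemma nv_pt (κ r θ : ℝ) : nv κ (pt r θ) = r * cos θ * bf 1 (κ * r ^ 2) := by rw [nv, RB_pt, pt_0]

lemma nv_pd0 (κ r θ : ℝ) : pd 0 (nv κ) (pt r θ) = bf 1 (κ * r ^ 2) - 2 * (κ * r ^ 2) * bf 2 (κ * r ^ 2) * cos θ ^ 2 := by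
  have := pd_mul (i := 0) (coord_contDiff 0) (RB_contDiff κ 1) (pt r θ)
  rw [pd_coord, pd_RB, RB_pt, RB_pt, pt_0] at this
  refine Eq.trans this ?_
  ring

lemma nv_pd1 (κ r θ : ℝ) : pd 1 (nv κ) (pt r θ) = - 2 * (κ * r ^ 2) * bf 2 (κ * r ^ 2) * (sin θ * cos θ) := by
  have := pd_mul (i := 1) (coord_contDiff 0) (RB_contDiff κ 1) (pt r θ)
  rw [pd_coord10, pd_RB, RB_pt, RB_pt, pt_0, pt_1] at this
  refine Eq.trans this ?_
  ring

lemma nv_int (κ : ℝ) : ∫ x in unitDisc, nv κ x = 0 := by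
  rw [polar_disc (nv_contDiff κ).continuous]
  have : ∀ r, ∫ θ in (-π)..π, r * nv κ (pt r θ) = 0 := by
    intro r
    have e : ∀ θ, r * nv κ (pt r θ) = (r ^ 2 * bf 1 (κ * r ^ 2)) * cos θ := fun θ => by rw [nv_pt]; ring
    simp_rw [e]
    rw [intervalIntegral.integral_const_mul, integral_cos]
    simp
  simp [this]

lemma nv_sq (κ : ℝ) : ∫ x in unitDisc, nv κ x ^ 2 = π * ∫ r in (0:ℝ)..1, r ^ 3 * bf 1 (κ * r ^ 2) ^ 2 := by
  have c := (nv_contDiff κ).continuous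
  rw [polar_disc (f := fun x => nv κ x ^ 2) (by fun_prop), ← intervalIntegral.integral_const_mul]
  congr 1; ext r
  have e : ∀ θ, r * nv κ (pt r θ) ^ 2 = 0 + (r ^ 3 * bf 1 (κ * r ^ 2) ^ 2) * cos θ ^ 2 + 0 * cos θ ^ 4 := fun θ => by rw [nv_pt]; ring
  simp_rw [e]
  rw [trig_int]; ring

lemma nv_sq_pos {κ : ℝ} (hκ : 0 < κ) (hpos1 : ∀ s, 0 ≤ s → s ≤ κ → 0 < bf 1 s) :
    0 < ∫ r in (0:ℝ)..1, r ^ 3 * bf 1 (κ * r ^ 2) ^ 2 := by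
  have c := bfk_cont κ 1
  apply intervalIntegral.intervalIntegral_pos_of_pos_on
    ((by fun_prop : Continuous fun r : ℝ => r ^ 3 * bf 1 (κ * r ^ 2) ^ 2).intervalIntegrable _ _) _ zero_lt_one
  intro r hr
  have h0 : 0 < r := hr.1
  have := hpos1 (κ * r ^ 2) (by positivity) (by
    have : r ^ 2 ≤ 1 := pow_le_one₀ hr.1.le hr.2.le
    nlinarith)
  positivity

lemma nv_energy {κ : ℝ} (hk : bf 1 κ = 2 * κ * bf 2 κ) {p q b α : ℝ} (hb : 0 ≤ b) (hp : p = α - b) (hq : q = α + b) :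
    ∫ x in unitDisc, (p * pd 0 (nv κ) x ^ 2 + q * pd 1 (nv κ) x ^ 2) ≤ 
      (α - b / 2) * (4 * κ) * ∫ x in unitDisc, nv κ x ^ 2 := by
  have c0 : Continuous (pd 0 (nv κ)) := (pd_contDiff (nv_contDiff κ)).continuous
  have c1 : Continuous (pd 1 (nv κ)) := (pd_contDiff (nv_contDiff κ)).continuous
  have d1 := bfk_cont κ 1
  have d2 := bfk_cont κ 2
  rw [polar_disc (f := fun x => p * pd 0 (nv κ) x ^ 2 + q * pd 1 (nv κ) x ^ 2) (by fun_prop), nv_sq]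
  have e : ∀ r, ∫ θ in (-π)..π, r * (p * pd 0 (nv κ) (pt r θ) ^ 2 + q * pd 1 (nv κ) (pt r θ) ^ 2)
      = π * (4 * κ * (α - b / 2)) * (r ^ 3 * bf 1 (κ * r ^ 2) ^ 2) + 
       ((π * (α - b / 2)) * (2 * r * bf 1 (κ * r ^ 2) ^ 2 - 4 * κ * r ^ 3 * bf 1 (κ * r ^ 2) * bf 2 (κ * r ^ 2)
          + 4 * κ ^ 2 * r ^ 5 * bf 2 (κ * r ^ 2) ^ 2 - 4 * κ * r ^ 3 * bf 1 (κ * r ^ 2) ^ 2) +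
       -(π * b) * (r * bf 1 (κ * r ^ 2) ^ 2 - 2 * κ * r ^ 3 * bf 1 (κ * r ^ 2) * bf 2 (κ * r ^ 2))) := by
    intro r
    have e' : ∀ θ, r * (p * pd 0 (nv κ) (pt r θ) ^ 2 + q * pd 1 (nv κ) (pt r θ) ^ 2)
       = (r * p * bf 1 (κ * r ^ 2) ^ 2) + (r * (q * (2 * (κ * r ^ 2) * bf 2 (κ * r ^ 2)) ^ 2 - p * 4 * (κ * r ^ 2) * bf 1 (κ * r ^ 2) * bf 2 (κ * r ^ 2))) * cos θ ^ 2
        + (r * (p - q) * (2 * (κ * r ^ 2) * bf 2 (κ * r ^ 2)) ^ 2) * cos θ ^ 4 := by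
      intro θ
      have hs : sin θ ^ 2 = 1 - cos θ ^ 2 := by rw [← sin_sq_add_cos_sq θ]; ring
      rw [nv_pd0, nv_pd1]
      linear_combination (r * q * (2 * (κ * r ^ 2) * bf 2 (κ * r ^ 2)) ^ 2 * cos θ ^ 2) * hs
    simp_rw [e']
    rw [trig_int, hp, hq]; ring
  simp_rw [e]
  have w1 : ∫ r in (0:ℝ)..1, (2 * r * bf 1 (κ * r ^ 2) ^ 2 - 4 * κ * r ^ 3 * bf 1 (κ * r ^ 2) * bf 2 (κ * r ^ 2)
          + 4 * κ ^ 2 * r ^ 5 * bf 2 (κ * r ^ 2) ^ 2 - 4 * κ * r ^ 3 * bf 1 (κ * r ^ 2) ^ 2) = 0 := by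
    rw [intervalIntegral.integral_eq_sub_of_hasDerivAt (f := fun r => r ^ 2 * bf 1 (κ * r ^ 2) ^ 2 - 2 * κ * (r ^ 4 * (bf 1 (κ * r ^ 2) * bf 2 (κ * r ^ 2))))]
    · norm_num; rw [hk]; ring
    · intro r _
      refine (((hasDerivAt_pow 2 r).mul ((bfk_deriv κ 1 r).pow 2)).sub
        (((hasDerivAt_pow 4 r).mul ((bfk_deriv κ 1 r).mul (bfk_deriv κ 2 r))).const_mul (2 * κ))).congr_deriv ?_
      have hrec := bf_rec 1 (κ * r ^ 2)
      norm_num at hrec ⊢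
      linear_combination (4 * κ * r ^ 3 * bf 1 (κ * r ^ 2)) * hrec
    · apply Continuous.intervalIntegrable; fun_prop
  have w2 : ∫ r in (0:ℝ)..1, (r * bf 1 (κ * r ^ 2) ^ 2 - 2 * κ * r ^ 3 * bf 1 (κ * r ^ 2) * bf 2 (κ * r ^ 2)) = bf 1 κ ^ 2 / 2 := by
    rw [intervalIntegral.integral_eq_sub_of_hasDerivAt (f := fun r => r ^ 2 * bf 1 (κ * r ^ 2) ^ 2 / 2)]
    · norm_num
    · intro r _
      refine (((hasDerivAt_pow 2 r).mul ((bfk_deriv κ 1 r).pow 2)).div_const 2).congr_deriv ?_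
      norm_num
      ring
    · apply Continuous.intervalIntegrable; fun_prop
  rw [intervalIntegral.integral_add (by apply Continuous.intervalIntegrable; fun_prop) (by apply Continuous.intervalIntegrable; fun_prop),
    intervalIntegral.integral_add (by apply Continuous.intervalIntegrable; fun_prop) (by apply Continuous.intervalIntegrable; fun_prop),
    intervalIntegral.integral_const_mul, intervalIntegral.integral_const_mul, intervalIntegral.integral_const_mul, w1, w2]
  have : 0 ≤ π * b * (bf 1 κ ^ 2 / 2) := by have := pi_pos; positivity
  linarith

/-- All spectral facts needed for the conclusion. -/
lemma summary : ∃ μ lam b₀ : ℝ, 0 < b₀ ∧ 0 < μ ∧ μ = nEig1 unitDisc ∧ lam = dEig1 unitDisc ∧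
    ∀ m α b : ℝ, 1 < m → α - b = (m ^ 2)⁻¹ → α + b = m ^ 2 → b < b₀ → 
      lam < dEig1 (Ell m) ∧ dEig1 (Ell m) ≤ α * lam ∧ (m ^ 2)⁻¹ * μ ≤ nEig1 (Ell m) ∧ nEig1 (Ell m) ≤ (α - b / 2) * μ := by
  obtain ⟨S, hS, hz, hpos⟩ := exists_first_zero
  obtain ⟨κ, hκ, hκS, hk⟩ := exists_kappa hS hz hpos
  obtain ⟨b₀, hb₀, hell⟩ := ell_pos hS hz hpos
  have hpos0 : ∀ s, 0 ≤ s → s ≤ κ → 0 < bf 0 s := fun s h1 h2 => hpos s h1 (by linarith)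
  have hpos1 : ∀ s, 0 ≤ s → s ≤ κ → 0 < bf 1 s := fun s h1 h2 => bf1_pos hpos s h1 (by linarith)
  have hI : 0 < ∫ x in unitDisc, nv κ x ^ 2 := by
    rw [nv_sq]; exact mul_pos pi_pos (nv_sq_pos hκ hpos1)
  have hmu : 4 * κ ≤ nEig1 unitDisc := by
    apply le_csInf
    · exact ⟨_, nv κ, nv_contDiff κ, nv_int κ, hI.ne', rfl⟩
    rintro R ⟨u, hu, hz, h0, rfl⟩
    have hp : 0 < ∫ x in unitDisc, u x ^ 2 := lt_of_le_of_ne (integral_nonneg fun x => by positivity) (Ne.symm h0)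
    rw [le_div_iff₀ hp]
    exact neumann_ineq hκ hpos0 hpos1 hk hu hz
  have key : ∀ m α b : ℝ, 1 < m → α - b = (m ^ 2)⁻¹ → α + b = m ^ 2 → b < b₀ → 
      dEig1 unitDisc < dEig1 (Ell m) ∧ dEig1 (Ell m) ≤ α * dEig1 unitDisc ∧ (m ^ 2)⁻¹ * nEig1 unitDisc ≤ nEig1 (Ell m) ∧ nEig1 (Ell m) ≤ (α - b / 2) * nEig1 unitDisc := by
    intro m α b hm h1 h2 hb
    have hm1 : (1:ℝ) < m ^ 2 := by nlinarith
    have hm2 : (m ^ 2)⁻¹ < 1 := inv_lt_one_of_one_lt₀ hm1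
    have hm3 : 0 < (m ^ 2)⁻¹ := by positivity
    have hb0 : 0 < b := by linarith
    have hab : α ^ 2 = 1 + b ^ 2 := by
      have : (α - b) * (α + b) = 1 := by rw [h1, h2]; field_simp
      linarith
    have hα : 1 ≤ α := by nlinarith
    refine ⟨lt_of_le_of_lt (dEig1_disc_le hS hz hpos) (ell_strict hS hm.le h1 h2 (hell b hb0 hb α hα hab)),
      dEig1_Ell_le hm.le (by linarith), nEig1_Ell_ge hm.le (nv_contDiff κ) (nv_int κ) hI.ne', ?_⟩
    have h := (nEig1_Ell_test hm.le (nv_contDiff κ) (nv_int κ) hI.ne').trans (nv_energy hk hb0.le h1.symm h2.symm)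
    have h' := le_of_mul_le_mul_right h hI
    refine h'.trans (mul_le_mul_of_nonneg_left hmu (by linarith))
  exact ⟨_, _, b₀, hb₀, by linarith, rfl, rfl, key⟩


lemma final_claim :
    ∃ Ω : ℕ → Set E2,
      (∀ n, (Ω n).Nonempty ∧ IsOpen (Ω n) ∧ Bornology.IsBounded (Ω n) ∧ Convex ℝ (Ω n)) ∧
      (∀ n, π * dEig1 unitDisc < (volume (Ω n)).toReal * dEig1 (Ω n)) ∧
      Tendsto (fun n =>
          ((volume (Ω n)).toReal * dEig1 (Ω n), (volume (Ω n)).toReal * nEig1 (Ω n)))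
        atTop (nhds (π * dEig1 unitDisc, π * nEig1 unitDisc)) ∧
      Tendsto (fun n =>
          (π * nEig1 unitDisc - (volume (Ω n)).toReal * nEig1 (Ω n)) /
            ((volume (Ω n)).toReal * dEig1 (Ω n) - π * dEig1 unitDisc))
        atTop atTop := by
  obtain ⟨μ, lam, b₀, hb₀, hμ, eμ, el, key⟩ := summary
  rw [← eμ, ← el]
  have hpi := pi_pos
  set b₁ : ℝ := min b₀ 1 with hb₁
  have hb₁0 : 0 < b₁ := lt_min hb₀ one_pos
  set b : ℕ → ℝ := fun n => b₁ / ((n : ℝ) + 2) with hb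
  set α : ℕ → ℝ := fun n => √(1 + b n ^ 2) with hα
  set m : ℕ → ℝ := fun n => √(α n + b n) with hm
  have hb0 : ∀ n, 0 < b n := fun n => by simp only [hb]; positivity
  have hbhalf : ∀ n, b n ≤ b₁ / 2 := fun n => by
    simp only [hb]
    have : (0:ℝ) ≤ n := n.cast_nonneg
    gcongr
    linarith
  have hb12 : ∀ n, b n ≤ 1 / 2 := fun n => by
    have := hbhalf n
    have : b₁ ≤ 1 := min_le_right _ _
    linarith
  have hbb : ∀ n, b n < b₀ := fun n => by
    have := hbhalf n
    have : b₁ ≤ b₀ := min_le_left _ _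
    linarith
  have hα2 : ∀ n, α n ^ 2 = 1 + b n ^ 2 := fun n => Real.sq_sqrt (by positivity)
  have hα0 : ∀ n, 0 ≤ α n := fun n => Real.sqrt_nonneg _
  have hα1 : ∀ n, 1 < α n := fun n => by nlinarith [hα2 n, hα0 n, hb0 n, mul_pos (hb0 n) (hb0 n)]
  have hαu : ∀ n, α n - 1 ≤ b n ^ 2 / 2 := fun n => by nlinarith [hα2 n, hα1 n, hα0 n]
  have hm2 : ∀ n, m n ^ 2 = α n + b n := fun n => Real.sq_sqrt (by linarith [hα1 n, hb0 n])
  have hmi : ∀ n, (m n ^ 2)⁻¹ = α n - b n := fun n => by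
    rw [hm2]
    apply inv_eq_of_mul_eq_one_right
    nlinarith [hα2 n]
  have hm1 : ∀ n, 1 < m n := fun n => by
    have h0 : 0 ≤ m n := Real.sqrt_nonneg _
    nlinarith [hm2 n, hα1 n, hb0 n]
  have K := fun n => key (m n) (α n) (b n) (hm1 n) (hmi n).symm (hm2 n).symm (hbb n)
  have hlam : 0 < lam := by
    have h1 := (K 0).1.trans_le (K 0).2.1
    nlinarith [hα1 0]
  have tb : Tendsto b atTop (nhds 0) := by
    apply Tendsto.div_atTop tendsto_const_nhds
    exact tendsto_atTop_add_const_right _ _ tendsto_natCast_atTop_atTop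
  have tα : Tendsto α atTop (nhds 1) := by
    have : Tendsto α atTop (nhds (√(1 + 0 ^ 2))) := ((tb.pow 2).const_add 1).sqrt
    simpa using this
  refine ⟨fun n => Ell (m n), fun n => ⟨Ell_nonempty _, Ell_open _, Ell_bdd (hm1 n).le, Ell_convex _⟩, ?_, ?_, ?_⟩
  · intro n
    simp only [Ell_vol (hm1 n).le]
    exact mul_lt_mul_of_pos_left (K n).1 hpi
  · simp only [fun n => Ell_vol (hm1 n).le]
    refine Tendsto.prodMk_nhds (Tendsto.const_mul _ ?_) (Tendsto.const_mul _ ?_)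
    · refine tendsto_of_tendsto_of_tendsto_of_le_of_le (tendsto_const_nhds (x := lam)) (h := fun n => α n * lam) ?_ (fun n => (K n).1.le) (fun n => (K n).2.1)
      simpa using tα.mul_const lam
    · refine tendsto_of_tendsto_of_tendsto_of_le_of_le (g := fun n => (α n - b n) * μ) (h := fun n => (α n - b n / 2) * μ) ?_ ?_
        (fun n => by have := (K n).2.2.1; rw [hmi n] at this; exact this) (fun n => (K n).2.2.2)
      · simpa using (tα.sub tb).mul_const μ
      · simpa using (tα.sub (tb.div_const 2)).mul_const μ
  · simp only [fun n => Ell_vol (hm1 n).le]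
    have hc : 0 < μ / (2 * lam * b₁) := by positivity
    refine tendsto_atTop_mono (f := fun n : ℕ => μ / (2 * lam * b₁) * ((n : ℝ) + 2)) ?_
      (Tendsto.const_mul_atTop hc (tendsto_atTop_add_const_right _ _ tendsto_natCast_atTop_atTop))
    intro n
    obtain ⟨k1, k2, -, k4⟩ := K n
    have hbn := hb0 n
    have e1 : μ / (2 * lam * b₁) * ((n : ℝ) + 2) = μ / (2 * lam * b n) := by
      simp only [hb]; field_simp
    simp only [e1]
    rw [← mul_sub, ← mul_sub, mul_div_mul_left _ _ hpi.ne', le_div_iff₀ (by linarith)]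
    have h1 : dEig1 (Ell (m n)) - lam ≤ lam * (b n ^ 2 / 2) := by nlinarith [hαu n]
    have h2 : μ * (b n / 4) ≤ μ - nEig1 (Ell (m n)) := by
      have : b n / 4 ≤ 1 - α n + b n / 2 := by nlinarith [hαu n, hb12 n]
      nlinarith
    refine le_trans (mul_le_mul_of_nonneg_left h1 (by positivity)) (le_trans (le_of_eq ?_) h2)
    field_simp
    ring

/-- Vertical tangent of the convex diagram at the point `A = (π λ₁(𝔻), π μ₁(𝔻))` of discs:
there is a sequence of convex sets whose diagram points converge to `A` from the right while
the difference quotient towards `A` blows up. -/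
theorem vertical_tangent_at_disc :
    ∃ Ω : ℕ → Set E2,
      (∀ n, (Ω n).Nonempty ∧ IsOpen (Ω n) ∧ Bornology.IsBounded (Ω n) ∧ Convex ℝ (Ω n)) ∧
      (∀ n, π * dEig1 unitDisc < (volume (Ω n)).toReal * dEig1 (Ω n)) ∧
      Tendsto (fun n =>
          ((volume (Ω n)).toReal * dEig1 (Ω n), (volume (Ω n)).toReal * nEig1 (Ω n)))
        atTop (nhds (π * dEig1 unitDisc, π * nEig1 unitDisc)) ∧
      Tendsto (fun n =>
          (π * nEig1 unitDisc - (volume (Ω n)).toReal * nEig1 (Ω n)) /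
            ((volume (Ω n)).toReal * dEig1 (Ω n) - π * dEig1 unitDisc))
        atTop atTop := by
  exact final_claim
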